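/- Let K be a field of characteristic zero, n ≥ 1, and let Γ be a subgroup of GL_n(K). Suppose there exist elements γ₁, …, γ_r ∈ Γ (not necessarily distinct) such that Γ = ⟨γ₁⟩⋯⟨γ_r⟩, i.e., every element of Γ can be written as γ₁^{k₁}⋯γ_r^{k_r} with k₁, …, k_r ∈ ℤ, and suppose that at most one of the elements γ₁, …, γ_r is not semi-simple. Then Γ is virtually solvable. -/

import Mathlib

open Matrix

/-- An element of `GL n K` is semi-simple if the corresponding linear endomorphism
of `K^n` is a semisimple endomorphism. -/
def IsSemisimpleElt {n : ℕ} {K : Type*} [Field K] (g : GL (Fin n) K) : Prop :=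
  Module.End.IsSemisimple ((g : Matrix (Fin n) (Fin n) K).mulVecLin)

/-- A group is virtually solvable if it has a solvable subgroup of finite index. -/
def IsVirtuallySolvable (G : Type*) [Group G] : Prop :=
  ∃ H : Subgroup G, H.FiniteIndex ∧ IsSolvable ↥H

/-!
Let `x ≠ 1` in `Γ`. Specializing a finitely generated ring of definition produces a number field `L`
and, for every large prime `p` with a prime of degree one above it in `L`, a reduction
`Θ : Γ → GL m (ℤ/p)` with `Θ x ≠ 1` that sends semisimple generators to elements of order dividing
`p - 1` and the remaining generator `γ j` to an element of order dividing `p (p - 1)`. Counting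
degree one primes of `L(ζ_Q)` by means of the pole of its Dedekind zeta function yields an `l` such
that the product of the primes `p` of this kind with `p - 1 ∣ l` exceeds a given power of `l`.

In the image of `Γ` in the product of the `GL m (ℤ/p)` over these `p`, the cyclic group generated
by `γ j ^ l` has index at most `l ^ r`. This is so small that for some `p` the image of that group
in `Θ Γ` is normal of index prime to `p`, and it has order `1` or `p`. The quotient of `Θ Γ` by it
lifts to `Θ Γ`, then to characteristic zero because its order is prime to `p`, and Jordan's
theorem applies to the lift. Hence `Θ Γ` has a metabelian subgroup of index bounded independently
of `x`, and as `Γ` is finitely generated these subgroups pull back to overgroups of a single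
subgroup of finite index.
-/

section BoundedGeneration

variable {G H : Type*} [Group G] [Group H] {r : ℕ} {g : Fin r → G}

/-- The group `G` is the product `⟨g 0⟩ ⋯ ⟨g (r - 1)⟩` of cyclic subgroups, in this order. -/
def BoundedlyGenerates (g : Fin r → G) : Prop :=
  ∀ x, ∃ k : Fin r → ℤ, x = (List.ofFn fun i => g i ^ k i).prod

theorem BoundedlyGenerates.map (hg : BoundedlyGenerates g) {φ : G →* H}
    (hφ : Function.Surjective φ) : BoundedlyGenerates (φ ∘ g) := by
  intro y
  obtain ⟨x, rfl⟩ := hφ y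
  obtain ⟨k, rfl⟩ := hg x
  refine ⟨k, ?_⟩
  simp only [map_list_prod, List.map_ofFn, Function.comp_def, map_zpow]

theorem BoundedlyGenerates.closure_range_eq_top (hg : BoundedlyGenerates g) :
    Subgroup.closure (Set.range g) = ⊤ := by
  refine (Subgroup.eq_top_iff' _).2 fun x => ?_
  obtain ⟨k, rfl⟩ := hg x
  refine Subgroup.list_prod_mem _ fun y hy => ?_
  obtain ⟨i, rfl⟩ := (List.mem_ofFn' _ _).1 hy
  exact Subgroup.zpow_mem _ (Subgroup.subset_closure (Set.mem_range_self i)) _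

theorem BoundedlyGenerates.subsingleton [IsEmpty (Fin r)] (hg : BoundedlyGenerates g) :
    Subsingleton G := by
  rw [← Subgroup.subsingleton_iff, ← subsingleton_iff_bot_eq_top, ← hg.closure_range_eq_top,
    Set.range_eq_empty, Subgroup.closure_empty]

theorem BoundedlyGenerates.fg (hg : BoundedlyGenerates g) : Group.FG G :=
  Group.fg_iff.2 ⟨Set.range g, hg.closure_range_eq_top, Set.finite_range g⟩

theorem zpow_eq_pow_toNat_emod_mul_zpow_ediv (x : G) {l : ℕ} (hl : 0 < l) (k : ℤ) :
    x ^ k = x ^ (k % l).toNat * (x ^ l) ^ (k / l) := by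
  have hmod : 0 ≤ k % l := Int.emod_nonneg k (by positivity)
  rw [← zpow_natCast x (k % l).toNat, ← zpow_natCast x l, ← _root_.zpow_mul, ← _root_.zpow_add,
    Int.toNat_of_nonneg hmod, Int.emod_add_mul_ediv]

theorem BoundedlyGenerates.index_zpowers_pow_le [Finite G] (hg : BoundedlyGenerates g) {j : Fin r}
    {l : ℕ} (hl : 0 < l) (hpow : ∀ i, i ≠ j → g i ^ l = 1) :
    (Subgroup.zpowers (g j ^ l)).index ≤ l ^ r := by
  classical
  set W := Subgroup.zpowers (g j ^ l)
  let f : (Fin r → Fin l) × W → G := fun t =>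
    (List.ofFn fun i => g i ^ (t.1 i : ℕ) * (if i = j then (t.2 : G) else 1)).prod
  have hf : Function.Surjective f := by
    intro x
    obtain ⟨k, rfl⟩ := hg x
    have hlt (i : Fin r) : (k i % l).toNat < l :=
      (Int.toNat_lt' hl).2 (Int.emod_lt_of_pos _ (by exact_mod_cast hl))
    refine ⟨(fun i => ⟨_, hlt i⟩, ⟨(g j ^ l) ^ (k j / l), _, rfl⟩), ?_⟩
    simp only [f]
    congr 2 with i
    rw [zpow_eq_pow_toNat_emod_mul_zpow_ediv (g i) hl (k i)]
    split_ifs with hi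
    · rw [hi]
    · rw [hpow i hi, _root_.one_zpow]
  have hcard := Nat.card_le_card_of_surjective f hf
  rw [Nat.card_prod, Nat.card_pi, ← W.card_mul_index, mul_comm] at hcard
  simpa using Nat.le_of_mul_le_mul_right hcard Nat.card_pos

theorem prime_dvd_relIndex_of_card_eq_of_ne [Finite G] {p : ℕ} (hp : p.Prime) {K K' : Subgroup G}
    (hK : Nat.card K = p) (hK' : Nat.card K' = p) (hne : K ≠ K') : p ∣ K'.relIndex K := by
  have := Fact.mk hp
  have : Fact (Nat.card K).Prime := ⟨hK ▸ hp⟩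
  rcases Subgroup.eq_bot_or_eq_top_of_prime_card (K'.subgroupOf K) with hbot | htop
  · rw [Subgroup.relIndex, hbot, Subgroup.index_bot, hK]
  · exact absurd (Subgroup.eq_of_le_of_card_ge (Subgroup.subgroupOf_eq_top.1 htop)
      (hK'.trans hK.symm).le) hne

theorem prime_dvd_relIndex_map_conj [Finite H] (π : G →* H) {W : Subgroup G} {x : G} {p : ℕ}
    (hp : p.Prime) (hW : Nat.card (W.map π) = p)
    (hx : π x ∉ Subgroup.normalizer (W.map π : Set H)) :
    p ∣ (W.map (MulAut.conj x).toMonoidHom).relIndex W := by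
  set W' := W.map (MulAut.conj x).toMonoidHom
  have hconj : W'.map π = (W.map π).map (MulAut.conj (π x)).toMonoidHom := by
    rw [Subgroup.map_map, Subgroup.map_map]
    congr 1
    ext y
    simp
  have hcard : Nat.card (W'.map π) = p := by
    rw [hconj, Subgroup.card_map_of_injective (MulAut.conj (π x)).injective, hW]
  have hne : W.map π ≠ W'.map π := fun h =>
    hx (Subgroup.mem_normalizer_iff_map_conj_eq.2 (hconj.symm.trans h.symm))
  refine (prime_dvd_relIndex_of_card_eq_of_ne hp hW hcard hne).trans ?_
  rw [← Subgroup.relIndex_comap]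
  exact Subgroup.relIndex_dvd_of_le_left W (Subgroup.le_comap_map π W')

theorem relIndex_map_conj_le_index {W : Subgroup G} (hW : W.index ≠ 0) (x : G) :
    (W.map (MulAut.conj x).toMonoidHom).relIndex W ≤ W.index := by
  have hindex : (W.map (MulAut.conj x).toMonoidHom).index = W.index :=
    Subgroup.index_map_equiv W (MulAut.conj x)
  rw [← hindex, ← Subgroup.relIndex_top_right]
  refine Subgroup.relIndex_le_of_le_right le_top ?_
  rwa [Subgroup.relIndex_top_right, hindex]

theorem prod_primes_le_pow_card {ι : Type*} [Fintype ι] (N : ι → ℕ) {m : ℕ} (h0 : ∀ i, N i ≠ 0)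
    (hm : ∀ i, N i ≤ m) (A : Finset ℕ) (hA : ∀ p ∈ A, p.Prime) (hdvd : ∀ p ∈ A, ∃ i, p ∣ N i) :
    ∏ p ∈ A, p ≤ m ^ Fintype.card ι := by
  have hprod : ∏ p ∈ A, p ∣ ∏ i, N i := by
    refine Finset.prod_primes_dvd _ (fun p hp => (hA p hp).prime) fun p hp => ?_
    obtain ⟨i, hi⟩ := hdvd p hp
    exact hi.trans (Finset.dvd_prod_of_mem N (Finset.mem_univ i))
  calc ∏ p ∈ A, p ≤ ∏ i, N i :=
        Nat.le_of_dvd (Finset.prod_pos fun i _ => Nat.pos_of_ne_zero (h0 i)) hprod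
    _ ≤ m ^ Fintype.card ι := Finset.prod_le_pow_card _ _ _ fun i _ => hm i

theorem BoundedlyGenerates.exists_notMem_normalizer (hg : BoundedlyGenerates g) {W : Subgroup G}
    (hW : ¬ W.Normal) : ∃ i, g i ∉ Subgroup.normalizer (W : Set G) := by
  by_contra! hmem
  refine hW (Subgroup.normalizer_eq_top_iff.1 (top_le_iff.1 ?_))
  rw [← hg.closure_range_eq_top, Subgroup.closure_le]
  exact Set.range_subset_iff.2 hmem

-- If the subgroup `W` generated by `g j ^ l` had bad image in `H p`, then `p` would divide one of
-- the `r + 1` numbers `[G : W]` and `[W : W ∩ gᵢ W gᵢ⁻¹]`, all of which are at most `l ^ r`.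
theorem BoundedlyGenerates.exists_normal_zpowers_of_prod_primes_gt [Finite G]
    (hg : BoundedlyGenerates g) {j : Fin r} {l : ℕ} (hl : 0 < l)
    (hpow : ∀ i, i ≠ j → g i ^ l = 1) (A : Finset ℕ) (hA : ∀ p ∈ A, p.Prime)
    (hbig : l ^ (r * (r + 1)) < ∏ p ∈ A, p) {H : A → Type*} [∀ p, Group (H p)]
    (π : ∀ p, G →* H p) (hπ : ∀ p, Function.Surjective (π p))
    (hj : ∀ p, π p (g j) ^ (l * p) = 1) :
    ∃ p, (Subgroup.zpowers (π p (g j) ^ l)).Normal ∧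
      ¬ (p : ℕ) ∣ (Subgroup.zpowers (π p (g j) ^ l)).index := by
  by_contra! hbad
  set W := Subgroup.zpowers (g j ^ l)
  have hWmap (p : A) : W.map (π p) = Subgroup.zpowers (π p (g j) ^ l) := by
    rw [MonoidHom.map_zpowers, map_pow]
  have hW0 : W.index ≠ 0 := Subgroup.index_ne_zero_of_finite
  have hWl : W.index ≤ l ^ r := hg.index_zpowers_pow_le hl hpow
  let N : Option (Fin r) → ℕ :=
    Option.rec W.index fun i => (W.map (MulAut.conj (g i)).toMonoidHom).relIndex W
  have hdvd (p : A) : ∃ o, (p : ℕ) ∣ N o := by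
    have hp := hA p p.2
    have : Finite (H p) := .of_surjective _ (hπ p)
    by_cases hnormal : (W.map (π p)).Normal
    · exact ⟨none, (hWmap p ▸ hbad p (hWmap p ▸ hnormal)).trans (W.index_map_dvd (hπ p))⟩
    · have hcard : Nat.card (W.map (π p)) = p := by
        rw [hWmap, Nat.card_zpowers]
        refine (Nat.dvd_prime hp).1 (orderOf_dvd_of_pow_eq_one ?_) |>.resolve_left fun h1 => ?_
        · rw [← pow_mul, hj]
        · refine hnormal ?_
          rw [hWmap, orderOf_eq_one_iff.1 h1, Subgroup.zpowers_one_eq_bot]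
          infer_instance
      obtain ⟨i, hi⟩ := (hg.map (hπ p)).exists_notMem_normalizer hnormal
      exact ⟨some i, prime_dvd_relIndex_map_conj (π p) hp hcard hi⟩
  refine hbig.not_ge ?_
  have hle := prod_primes_le_pow_card N (m := l ^ r)
    (Option.rec hW0 fun _ => Subgroup.index_ne_zero_of_finite)
    (Option.rec hWl fun i => (relIndex_map_conj_le_index hW0 (g i)).trans hWl)
    A hA fun p hp => hdvd ⟨p, hp⟩
  rwa [Fintype.card_option, Fintype.card_fin, ← pow_mul] at hle

end BoundedGeneration

section Residual

universe u

variable {G : Type*} [Group G]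

theorem finite_monoidHom_of_fg [Group.FG G] (P : Type*) [Group P] [Finite P] :
    Finite (G →* P) := by
  obtain ⟨S, hS, hfin⟩ := Group.fg_iff.1 ‹Group.FG G›
  have := hfin.to_subtype
  refine Finite.of_injective (fun (f : G →* P) (s : S) => f s) fun f f' h => ?_
  exact MonoidHom.eq_of_eqOn_dense hS fun s hs => congrFun h ⟨s, hs⟩

theorem exists_finiteIndex_forall_le_of_index_le (G : Type*) [Group G] [Group.FG G] (J : ℕ) :
    ∃ K : Subgroup G, K.FiniteIndex ∧ ∀ H : Subgroup G, H.index ≠ 0 → H.index ≤ J → K ≤ H := by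
  have hhom (m : Fin (J + 1)) : Finite (G →* Equiv.Perm (Fin m)) := finite_monoidHom_of_fg _
  refine ⟨⨅ m : Fin (J + 1), ⨅ f : G →* Equiv.Perm (Fin m), f.ker,
    Subgroup.finiteIndex_iInf fun _ => Subgroup.finiteIndex_iInf fun f => inferInstance,
    fun H h0 hJ => ?_⟩
  have : H.FiniteIndex := ⟨h0⟩
  let e : G ⧸ H ≃ Fin H.index := Finite.equivFin (G ⧸ H)
  refine ((iInf_le _ (⟨H.index, by omega⟩ : Fin (J + 1))).trans
    (iInf_le _ ((e.permCongrHom : _ →* _).comp (MulAction.toPermHom G (G ⧸ H))))).trans ?_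
  rw [MonoidHom.ker_mulEquiv_comp, ← Subgroup.normalCore_eq_ker]
  exact H.normalCore_le

theorem isVirtuallySolvable_of_residually_bounded [Group.FG G] (J d : ℕ)
    (h : ∀ x : G, x ≠ 1 → ∃ (Q : Type u) (_ : Group Q) (φ : G →* Q) (H : Subgroup Q),
      Function.Surjective φ ∧ φ x ≠ 1 ∧ H.index ≠ 0 ∧ H.index ≤ J ∧ derivedSeries H d = ⊥) :
    IsVirtuallySolvable G := by
  obtain ⟨K, hKfin, hK⟩ := exists_finiteIndex_forall_le_of_index_le G J
  refine ⟨K, hKfin, ⟨d, (Subgroup.eq_bot_iff_forall _).2 fun x hx => ?_⟩⟩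
  by_contra hx1
  obtain ⟨Q, _, φ, H, hφ, hφx, h0, hJ, hd⟩ := h x (by simpa using hx1)
  have hindex : (H.comap φ).index = H.index := Subgroup.index_comap_of_surjective H hφ
  have hKH : K ≤ H.comap φ := hK _ (hindex ▸ h0) (hindex ▸ hJ)
  let ψ : K →* H := (φ.subgroupComap H).comp (Subgroup.inclusion hKH)
  have hψ : ψ x ∈ derivedSeries H d :=
    map_derivedSeries_le_derivedSeries ψ d (Subgroup.mem_map_of_mem ψ hx)
  rw [hd, Subgroup.mem_bot] at hψ
  exact hφx (congrArg Subtype.val hψ)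

end Residual

section Jordan

open scoped commutatorElement

theorem commutatorElement_pow_left_of_commute {G : Type*} [Group G] {a b : G}
    (h : Commute a ⁅a, b⁆) (k : ℕ) : ⁅a ^ k, b⁆ = ⁅a, b⁆ ^ k := by
  induction k with
  | zero => simp
  | succ k ih =>
    rw [pow_succ', commutatorElement_mul_left_eq_conj_mul, ih,
      (h.pow_right k).eq, mul_inv_cancel_right, pow_succ]

variable {A H : Type*} [NormedRing A] [Group H] {ρ : H →* A}

theorem norm_map_mul_of_norm_map_le_one (hρ : ∀ h, ‖ρ h‖ ≤ 1) (h : H) (x : A) :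
    ‖ρ h * x‖ = ‖x‖ := by
  have hle (h : H) (x : A) : ‖ρ h * x‖ ≤ ‖x‖ :=
    (norm_mul_le _ _).trans (mul_le_of_le_one_left (norm_nonneg _) (hρ h))
  refine le_antisymm (hle h x) ?_
  simpa only [← mul_assoc, ← map_mul, inv_mul_cancel, map_one, one_mul] using hle h⁻¹ (ρ h * x)

theorem norm_mul_map_of_norm_map_le_one (hρ : ∀ h, ‖ρ h‖ ≤ 1) (h : H) (x : A) :
    ‖x * ρ h‖ = ‖x‖ := by
  have hle (h : H) (x : A) : ‖x * ρ h‖ ≤ ‖x‖ :=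
    (norm_mul_le _ _).trans (mul_le_of_le_one_right (norm_nonneg _) (hρ h))
  refine le_antisymm (hle h x) ?_
  simpa only [mul_assoc, ← map_mul, mul_inv_cancel, map_one, mul_one] using hle h⁻¹ (x * ρ h)

theorem norm_map_commutatorElement_sub_one (hρ : ∀ h, ‖ρ h‖ ≤ 1) (a b : H) :
    ‖ρ ⁅a, b⁆ - 1‖ = ‖ρ a * (ρ b - 1) - (ρ b - 1) * ρ a‖ := by
  have hab : ⁅a, b⁆ * (b * a) = a * b := by rw [commutatorElement_def]; group
  have : (ρ ⁅a, b⁆ - 1) * ρ (b * a) = ρ a * (ρ b - 1) - (ρ b - 1) * ρ a := by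
    rw [sub_mul, ← map_mul, hab, map_mul, map_mul]
    noncomm_ring
  rw [← this, norm_mul_map_of_norm_map_le_one hρ]

theorem norm_map_commutatorElement_sub_one_le_two_mul (hρ : ∀ h, ‖ρ h‖ ≤ 1) (a b : H) :
    ‖ρ ⁅a, b⁆ - 1‖ ≤ 2 * ‖ρ b - 1‖ := by
  rw [norm_map_commutatorElement_sub_one hρ]
  refine (norm_sub_le _ _).trans_eq ?_
  rw [norm_map_mul_of_norm_map_le_one hρ, norm_mul_map_of_norm_map_le_one hρ, two_mul]

theorem norm_map_commutatorElement_sub_one_le_mul (hρ : ∀ h, ‖ρ h‖ ≤ 1) (a b : H) :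
    ‖ρ ⁅a, b⁆ - 1‖ ≤ 2 * ‖ρ a - 1‖ * ‖ρ b - 1‖ := by
  have : ρ a * (ρ b - 1) - (ρ b - 1) * ρ a
      = (ρ a - 1) * (ρ b - 1) - (ρ b - 1) * (ρ a - 1) := by noncomm_ring
  rw [norm_map_commutatorElement_sub_one hρ, this]
  calc _ ≤ ‖(ρ a - 1) * (ρ b - 1)‖ + ‖(ρ b - 1) * (ρ a - 1)‖ := norm_sub_le _ _
    _ ≤ ‖ρ a - 1‖ * ‖ρ b - 1‖ + ‖ρ b - 1‖ * ‖ρ a - 1‖ :=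
      add_le_add (norm_mul_le _ _) (norm_mul_le _ _)
    _ = 2 * ‖ρ a - 1‖ * ‖ρ b - 1‖ := by ring

variable [NormedSpace ℝ A]

theorem two_mul_norm_sub_one_sub_sq_le (u : A) :
    2 * ‖u - 1‖ - ‖u - 1‖ ^ 2 ≤ ‖u ^ 2 - 1‖ := by
  have hdecomp : (2 : ℝ) • (u - 1) = (u ^ 2 - 1) - (u - 1) * (u - 1) := by
    rw [two_smul]; noncomm_ring
  calc 2 * ‖u - 1‖ - ‖u - 1‖ ^ 2 = ‖(u ^ 2 - 1) - (u - 1) * (u - 1)‖ - ‖u - 1‖ * ‖u - 1‖ := by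
        rw [← hdecomp, norm_smul, Real.norm_ofNat, sq]
    _ ≤ ‖u ^ 2 - 1‖ := by
        linarith [norm_sub_le (u ^ 2 - 1) ((u - 1) * (u - 1)), norm_mul_le (u - 1) (u - 1)]

variable [Finite H]

-- A power `u` of `c` farthest from `1` satisfies `2 d - d ^ 2 ≤ d` for its distance `d < 1`.
theorem eq_one_of_norm_map_pow_sub_one_lt_one (hinj : Function.Injective ρ) {c : H}
    (hc : ∀ k : ℕ, ‖ρ (c ^ k) - 1‖ < 1) : c = 1 := by
  obtain ⟨⟨x, hx⟩, hmax⟩ := Finite.exists_max fun x : Subgroup.zpowers c => ‖ρ x - 1‖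
  obtain ⟨m, rfl⟩ : x ∈ Submonoid.powers c := mem_powers_iff_mem_zpowers.2 hx
  have hsq : ‖ρ (c ^ m) ^ 2 - 1‖ ≤ ‖ρ (c ^ m) - 1‖ := by
    simpa only [map_pow] using hmax ⟨(c ^ m) ^ 2, Subgroup.pow_mem _ hx 2⟩
  have hzero : ‖ρ (c ^ m) - 1‖ ≤ 0 := by
    have := two_mul_norm_sub_one_sub_sq_le (ρ (c ^ m))
    nlinarith [hc m, norm_nonneg (ρ (c ^ m) - 1)]
  have hone : ‖ρ c - 1‖ ≤ 0 := (hmax ⟨c, Subgroup.mem_zpowers c⟩).trans hzero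
  exact hinj (by rw [map_one, sub_eq_zero.1 (norm_le_zero_iff.1 hone)])

theorem commute_of_norm_map_sub_one_lt_half (hinj : Function.Injective ρ)
    (hρ : ∀ h, ‖ρ h‖ ≤ 1) {a b : H} (ha : ‖ρ a - 1‖ < 1 / 2) (hb : ‖ρ b - 1‖ < 1 / 2) :
    Commute a b := by
  by_contra hab
  obtain ⟨c, ⟨hc, hac⟩, hmin⟩ := Set.exists_min_image
    {c : H | ‖ρ c - 1‖ < 1 / 2 ∧ ¬ Commute a c} (fun c => ‖ρ c - 1‖) (Set.toFinite _) ⟨b, hb, hab⟩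
  have hpos : 0 < ‖ρ c - 1‖ := by
    refine norm_pos_iff.2 fun h => hac ?_
    rw [hinj ((sub_eq_zero.1 h).trans (map_one ρ).symm)]
    exact Commute.one_right a
  have hlt : ‖ρ ⁅a, c⁆ - 1‖ < ‖ρ c - 1‖ := by
    nlinarith [norm_map_commutatorElement_sub_one_le_mul hρ a c]
  have hcomm : Commute a ⁅a, c⁆ := by
    by_contra h
    exact (hmin _ ⟨hlt.trans hc, h⟩).not_gt hlt
  refine hac (commutatorElement_eq_one_iff_commute.1
    (eq_one_of_norm_map_pow_sub_one_lt_one hinj fun k => ?_))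
  rw [← commutatorElement_pow_left_of_commute hcomm]
  linarith [norm_map_commutatorElement_sub_one_le_two_mul hρ (a ^ k) c]

theorem index_le_of_forall_norm_map_sub_one_lt_half_mem [FiniteDimensional ℝ A]
    (hρ : ∀ h, ‖ρ h‖ ≤ 1) {H₀ : Subgroup H} (hH₀ : ∀ h, ‖ρ h - 1‖ < 1 / 2 → h ∈ H₀) :
    H₀.index ≤ 5 ^ Module.finrank ℝ A := by
  classical
  have := Fintype.ofFinite (H ⧸ H₀)
  let f : H ⧸ H₀ → A := fun q => (2 : ℝ) • ρ q.out
  have hsep (q q' : H ⧸ H₀) (hq : q ≠ q') : 1 ≤ ‖f q - f q'‖ := by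
    contrapose! hq
    rw [← q.out_eq, ← q'.out_eq]
    refine QuotientGroup.eq.2 (hH₀ _ ?_)
    have hdist : ‖ρ (q.out⁻¹ * q'.out) - 1‖ = ‖ρ q.out - ρ q'.out‖ := by
      rw [norm_sub_rev (ρ q.out),
        ← norm_map_mul_of_norm_map_le_one hρ q.out⁻¹ (ρ q'.out - ρ q.out), mul_sub, ← map_mul,
        ← map_mul, inv_mul_cancel, map_one]
    rw [← smul_sub, norm_smul, Real.norm_ofNat] at hq
    linarith
  have hinj : Function.Injective f := fun q q' h => by
    by_contra hne
    have := hsep q q' hne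
    rw [h, sub_self, norm_zero] at this
    linarith
  have hcard := Besicovitch.card_le_of_separated (Finset.univ.image f)
    (by
      simp only [Finset.forall_mem_image, f, norm_smul, Real.norm_ofNat]
      intro q _
      linarith [hρ q.out])
    (by
      simp only [Finset.forall_mem_image]
      exact fun q _ q' _ hne => hsep q q' fun h => hne (congrArg f h))
  rwa [Finset.card_image_of_injective _ hinj, Finset.card_univ, ← Nat.card_eq_fintype_card]
    at hcard

theorem exists_isMulCommutative_index_le_of_norm_map_le_one [FiniteDimensional ℝ A]
    (hinj : Function.Injective ρ) (hρ : ∀ h, ‖ρ h‖ ≤ 1) :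
    ∃ H₀ : Subgroup H, H₀.index ≤ 5 ^ Module.finrank ℝ A ∧ IsMulCommutative H₀ :=
  ⟨Subgroup.closure {h | ‖ρ h - 1‖ < 1 / 2},
    index_le_of_forall_norm_map_sub_one_lt_half_mem hρ fun _ h => Subgroup.subset_closure h,
    Subgroup.isMulCommutative_closure fun _ ha _ hb =>
      commute_of_norm_map_sub_one_lt_half hinj hρ ha hb⟩

end Jordan

section ComplexJordan

open scoped ComplexOrder MatrixOrder

variable {m H : Type*} [Fintype m] [DecidableEq m] [Group H] [Finite H]

theorem exists_posDef_forall_conjTranspose_mul_mul_eq (ρ : H →* GL m ℂ) :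
    ∃ S : Matrix m m ℂ, S.PosDef ∧ ∀ h, (ρ h : Matrix m m ℂ)ᴴ * S * ρ h = S := by
  have := Fintype.ofFinite H
  refine ⟨∑ h, (ρ h : Matrix m m ℂ)ᴴ * ρ h, ?_, fun h => ?_⟩
  · classical
    rw [← Finset.add_sum_erase _ _ (Finset.mem_univ (1 : H))]
    refine Matrix.PosDef.add_posSemidef (by simpa using Matrix.PosDef.one)
      (Matrix.posSemidef_sum _ fun h _ => Matrix.posSemidef_conjTranspose_mul_self _)
  · rw [Finset.mul_sum, Finset.sum_mul]
    refine Fintype.sum_equiv (Equiv.mulRight h) _ _ fun x => ?_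
    simp [Matrix.mul_assoc]

theorem exists_conj_mem_unitaryGroup (ρ : H →* GL m ℂ) :
    ∃ B : GL m ℂ, ∀ h, ((B * ρ h * B⁻¹ : GL m ℂ) : Matrix m m ℂ) ∈ Matrix.unitaryGroup m ℂ := by
  obtain ⟨S, hS, hρS⟩ := exists_posDef_forall_conjTranspose_mul_mul_eq ρ
  obtain ⟨B, hSB⟩ : ∃ B : Matrix m m ℂ, S = Bᴴ * B :=
    CStarAlgebra.nonneg_iff_eq_star_mul_self.mp hS.posSemidef.nonneg
  obtain ⟨B, rfl⟩ : IsUnit B := isUnit_of_mul_isUnit_right (hSB ▸ hS.isUnit)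
  refine ⟨B, fun h => Matrix.mem_unitaryGroup_iff'.2 ?_⟩
  set C : Matrix m m ℂ := ↑(B⁻¹ : GL m ℂ)
  have hBC : (B : Matrix m m ℂ) * C = 1 := B.mul_inv
  calc _ = Cᴴ * ((ρ h : Matrix m m ℂ)ᴴ * ((B : Matrix m m ℂ)ᴴ * B) * ρ h) * C := by
        simp only [Units.val_mul, Matrix.star_eq_conjTranspose, Matrix.conjTranspose_mul,
          Matrix.mul_assoc, C]
    _ = ((B : Matrix m m ℂ) * C)ᴴ * ((B : Matrix m m ℂ) * C) := by
        rw [← hSB, hρS, hSB]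
        simp only [Matrix.conjTranspose_mul, Matrix.mul_assoc]
    _ = 1 := by rw [hBC, Matrix.conjTranspose_one, one_mul]

open scoped Matrix.Norms.L2Operator in
theorem norm_le_one_of_mem_unitaryGroup {U : Matrix m m ℂ} (hU : U ∈ Matrix.unitaryGroup m ℂ) :
    ‖U‖ ≤ 1 := by
  rcases isEmpty_or_nonempty m with hm | hm
  · rw [Subsingleton.elim U 0, norm_zero]
    exact zero_le_one
  · exact (CStarRing.norm_of_mem_unitary hU).le

open scoped Matrix.Norms.L2Operator in
theorem exists_isMulCommutative_index_le_of_injective_GL_complex {ρ : H →* GL m ℂ}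
    (hρ : Function.Injective ρ) :
    ∃ H₀ : Subgroup H, H₀.index ≤ 5 ^ (2 * Fintype.card m ^ 2) ∧ IsMulCommutative H₀ := by
  obtain ⟨B, hB⟩ := exists_conj_mem_unitaryGroup ρ
  let σ : H →* Matrix m m ℂ :=
    (Units.coeHom _).comp ((MulAut.conj B : GL m ℂ →* GL m ℂ).comp ρ)
  have hσ : Function.Injective σ :=
    Units.val_injective.comp ((MulAut.conj B).injective.comp hρ)
  have hrank : Module.finrank ℝ (Matrix m m ℂ) = 2 * Fintype.card m ^ 2 := by
    rw [Module.finrank_matrix, Complex.finrank_real_complex]; ring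
  rw [← hrank]
  exact exists_isMulCommutative_index_le_of_norm_map_le_one hσ
    fun h => norm_le_one_of_mem_unitaryGroup (hB h)

end ComplexJordan

section GroupExtensions

variable {P Q H : Type*} [Group P] [Group Q] [Group H]

theorem exists_section_of_coprime_card_ker [Finite P] {f : P →* H} (hf : Function.Surjective f)
    (hcop : (Nat.card f.ker).Coprime (Nat.card H)) :
    ∃ s : H →* P, f.comp s = MonoidHom.id H := by
  have hindex : f.ker.index = Nat.card H := by
    rw [Subgroup.index_ker, MonoidHom.range_eq_top.2 hf, Subgroup.card_top]
  obtain ⟨C, hC⟩ := Subgroup.exists_right_complement'_of_coprime (hindex.symm ▸ hcop)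
  let eC : P ⧸ f.ker ≃* C := hC.symm.QuotientMulEquiv
  let eH : P ⧸ f.ker ≃* H := QuotientGroup.quotientKerEquivOfSurjective f hf
  refine ⟨C.subtype.comp (eC.toMonoidHom.comp eH.symm.toMonoidHom), MonoidHom.ext fun h => ?_⟩
  calc f (eC (eH.symm h)) = eH (eC.symm (eC (eH.symm h))) := rfl
    _ = h := by rw [eC.symm_apply_apply, eH.apply_symm_apply]

theorem exists_lift_of_isPGroup_ker {p : ℕ} [Fact p.Prime] [Finite P] [Finite H] {π : P →* Q}
    (hπ : Function.Surjective π) (hker : IsPGroup p π.ker) (hH : (Nat.card H).Coprime p)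
    (ρ : H →* Q) : ∃ σ : H →* P, π.comp σ = ρ := by
  let pullback : Subgroup (H × P) :=
    (ρ.comp (MonoidHom.fst H P)).eqLocus (π.comp (MonoidHom.snd H P))
  let f : pullback →* H := (MonoidHom.fst H P).comp pullback.subtype
  have hf : Function.Surjective f := fun h =>
    let ⟨g, hg⟩ := hπ (ρ h)
    ⟨⟨(h, g), hg.symm⟩, rfl⟩
  have hfker : IsPGroup p f.ker := by
    rintro ⟨⟨⟨h, g⟩, hx : ρ h = π g⟩, rfl : h = 1⟩
    obtain ⟨k, hk⟩ := hker ⟨g, by rw [MonoidHom.mem_ker, ← hx, map_one]⟩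
    exact ⟨k, Subtype.ext <| Subtype.ext <| Prod.ext (one_pow _) (congrArg Subtype.val hk)⟩
  obtain ⟨m, hm⟩ := IsPGroup.iff_card.1 hfker
  obtain ⟨s, hs⟩ := exists_section_of_coprime_card_ker hf (hm ▸ hH.symm.pow_left m)
  refine ⟨((MonoidHom.snd H P).comp pullback.subtype).comp s, MonoidHom.ext fun h => ?_⟩
  calc π (s h : H × P).2 = ρ (f (s h)) := (s h).2.symm
    _ = ρ h := congrArg ρ (DFunLike.congr_fun hs h)

theorem derivedSeries_two_eq_bot_of_isMulCommutative_ker [IsMulCommutative Q] (f : P →* Q)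
    [IsMulCommutative f.ker] : derivedSeries P 2 = ⊥ := by
  have hcomm : derivedSeries P 1 ≤ f.ker := by
    rw [derivedSeries_one, commutator_def, Subgroup.commutator_le]
    intro a _ b _
    rw [MonoidHom.mem_ker, map_commutatorElement, commutatorElement_eq_one_iff_mul_comm,
      mul_comm' (f a)]
  rw [derivedSeries_succ, Subgroup.commutator_eq_bot_iff_le_centralizer]
  exact hcomm.trans (f.ker.le_centralizer.trans (Subgroup.centralizer_le hcomm))

end GroupExtensions

section CongruenceKernel

theorem one_add_natCast_mul_pow_prime_pow_eq_one {A : Type*} [Ring A] {p k : ℕ}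
    (hp : (p : A) ^ (k + 1) = 0) (z : A) : (1 + p * z) ^ p ^ k = 1 := by
  have hdvd : ((p : Polynomial ℤ) ^ (k + 1)) ∣
      (1 + (p : Polynomial ℤ) * Polynomial.X) ^ p ^ k - 1 ^ p ^ k :=
    dvd_sub_pow_of_dvd_sub ⟨Polynomial.X, add_sub_cancel_left _ _⟩ k
  have hzero := map_dvd (Polynomial.aeval z) hdvd
  simpa only [map_pow, map_natCast, hp, map_sub, map_add, map_mul, map_one, Polynomial.aeval_X,
    one_pow, zero_dvd_iff, sub_eq_zero] using hzero

theorem GL_map_surjective {m R S : Type*} [Fintype m] [DecidableEq m] [CommRing R] [CommRing S]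
    {f : R →+* S} [IsLocalHom f] (hf : Function.Surjective f) :
    Function.Surjective (GeneralLinearGroup.map (n := m) f) := by
  intro g
  obtain ⟨M, hM⟩ : ∃ M : Matrix m m R, f.mapMatrix M = g :=
    ⟨(g : Matrix m m S).map (Function.surjInv hf),
      Matrix.ext fun _ _ => Function.surjInv_eq hf _⟩
  have hdet : IsUnit M.det := by
    rw [← isUnit_map_iff f, RingHom.map_det, hM]
    exact (Matrix.isUnit_iff_isUnit_det _).1 g.isUnit
  exact ⟨GeneralLinearGroup.mk'' M hdet, Units.ext hM⟩

theorem GL_map_val_sub_one_apply {m R S : Type*} [Fintype m] [DecidableEq m] [CommRing R]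
    [CommRing S] (f : R →+* S) (g : GL m R) (i j : m) :
    ((GeneralLinearGroup.map f g).val - 1) i j = f ((g.val - 1) i j) := by
  calc ((GeneralLinearGroup.map f g).val - 1) i j
      = (f.mapMatrix g.val - f.mapMatrix 1 : Matrix m m S) i j := by rw [map_one]; rfl
    _ = f ((g.val - 1) i j) := by rw [← map_sub]; rfl

variable (p k : ℕ)

/-- The reduction homomorphism `ℤ/p^(k+1) → ℤ/p`. -/
abbrev zmodPowReduction : ZMod (p ^ (k + 1)) →+* ZMod p :=
  ZMod.castHom (dvd_pow_self p k.succ_ne_zero) (ZMod p)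

variable [Fact p.Prime]

instance isLocalHom_zmodPowReduction : IsLocalHom (zmodPowReduction p k) where
  map_nonunit x hx := by
    obtain ⟨a, rfl⟩ := ZMod.natCast_zmod_surjective x
    rw [map_natCast, ZMod.isUnit_iff_coprime] at hx
    rw [ZMod.isUnit_iff_coprime]
    exact hx.pow_right _

theorem eq_natCast_mul_of_zmodPowReduction_eq_zero {x : ZMod (p ^ (k + 1))}
    (hx : zmodPowReduction p k x = 0) : ∃ z, x = p * z := by
  obtain ⟨a, rfl⟩ := ZMod.natCast_zmod_surjective x
  rw [map_natCast, ZMod.natCast_eq_zero_iff] at hx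
  obtain ⟨b, rfl⟩ := hx
  exact ⟨b, Nat.cast_mul p b⟩

variable {m : Type*} [Fintype m] [DecidableEq m]

theorem isPGroup_ker_GL_map_zmodPowReduction :
    IsPGroup p (GeneralLinearGroup.map (n := m) (zmodPowReduction p k)).ker := by
  rintro ⟨g, hg⟩
  have hentry : ∀ i j, ∃ z, (g.val - 1) i j = p * z := fun i j => by
    refine eq_natCast_mul_of_zmodPowReduction_eq_zero p k ?_
    rw [← GL_map_val_sub_one_apply, MonoidHom.mem_ker.1 hg, Units.val_one, sub_self,
      Matrix.zero_apply]
  choose z hz using hentry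
  have hg' : (g : Matrix m m (ZMod (p ^ (k + 1)))) = 1 + (p : Matrix m m _) * Matrix.of z := by
    rw [← sub_eq_iff_eq_add', ← nsmul_eq_mul]
    ext i j
    rw [hz, Matrix.smul_apply, nsmul_eq_mul, Matrix.of_apply]
  have hp : (p : Matrix m m (ZMod (p ^ (k + 1)))) ^ (k + 1) = 0 := by
    rw [← Nat.cast_pow, ← map_natCast (Matrix.scalar m), ZMod.natCast_self, map_zero]
  refine ⟨k, Subtype.ext (Units.ext ?_)⟩
  exact (congrArg (· ^ p ^ k) hg').trans (one_add_natCast_mul_pow_prime_pow_eq_one hp _)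

instance charZero_pi_zmod_prime_pow : CharZero (∀ k, ZMod (p ^ (k + 1))) := by
  refine charZero_of_inj_zero fun a ha => ?_
  have hdvd : p ^ (a + 1) ∣ a := (ZMod.natCast_eq_zero_iff _ _).1 (congrFun ha a)
  by_contra hne
  exact (Nat.le_of_dvd (Nat.pos_of_ne_zero hne) hdvd).not_gt
    ((Nat.lt_pow_self (Fact.out : p.Prime).one_lt).trans
      (Nat.pow_lt_pow_right (Fact.out : p.Prime).one_lt a.lt_succ_self))

variable {p}

-- The ring `∀ k, ZMod (p ^ (k + 1))` can replace `ℤ_[p]` as a ring of characteristic zero above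
-- `ZMod p`; in it no compatibility between the lifts modulo different powers of `p` is needed.
theorem exists_lift_GL_pi_zmod_prime_pow {H : Type*} [Group H] [Finite H]
    (hH : (Nat.card H).Coprime p) (ρ : H →* GL m (ZMod p)) :
    ∃ σ : H →* GL m (∀ k, ZMod (p ^ (k + 1))), ∀ k,
      (GeneralLinearGroup.map
        ((zmodPowReduction p k).comp (Pi.evalRingHom _ k))).comp σ = ρ := by
  choose σ hσ using fun k => exists_lift_of_isPGroup_ker
    (GL_map_surjective (m := m) (f := zmodPowReduction p k) (ZMod.ringHom_surjective _))
    (isPGroup_ker_GL_map_zmodPowReduction p k) hH ρ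
  let assemble : (∀ k, GL m (ZMod (p ^ (k + 1)))) →* GL m (∀ k, ZMod (p ^ (k + 1))) :=
    (Units.mapEquiv (Matrix.piRingEquiv (n := m)).symm.toMulEquiv).toMonoidHom.comp
      MulEquiv.piUnits.symm.toMonoidHom
  exact ⟨assemble.comp (MonoidHom.pi σ), hσ⟩

end CongruenceKernel

section Specialization

universe u

theorem exists_ringHom_numberField (T : Type u) [CommRing T] [CharZero T]
    [Algebra.FiniteType ℤ T] :
    ∃ (L : Type u) (_ : Field L) (_ : NumberField L), Nonempty (T →+* L) := by
  have : Module.Flat ℤ ℚ := IsLocalization.flat ℚ (nonZeroDivisors ℤ)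
  have : Nontrivial (TensorProduct ℤ ℚ T) :=
    (Algebra.TensorProduct.includeLeft_injective (S := ℤ) (A := ℚ)
      (FaithfulSMul.algebraMap_injective ℤ T)).nontrivial
  obtain ⟨I, hI⟩ := Ideal.exists_maximal (TensorProduct ℤ ℚ T)
  let L := TensorProduct ℤ ℚ T ⧸ I
  let _ : Field L := Ideal.Quotient.field I
  have hfinite : Module.Finite ℚ L := finite_of_finite_type_of_isJacobsonRing ℚ L
  have : CharZero L := charZero_of_injective_algebraMap (algebraMap ℚ L).injective
  refine ⟨L, inferInstance, { to_finiteDimensional := ?_ },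
    ⟨(Ideal.Quotient.mk I).comp
      (Algebra.TensorProduct.includeRight : T →ₐ[ℤ] TensorProduct ℤ ℚ T).toRingHom⟩⟩
  convert hfinite
  exact Subsingleton.elim _ _

variable {G X m : Type*} [Group G] [CommRing X] [Fintype m] [DecidableEq m]

theorem GL_map_injective {R S : Type*} [CommRing R] [CommRing S] {f : R →+* S}
    (hf : Function.Injective f) : Function.Injective (GeneralLinearGroup.map (n := m) f) :=
  Units.map_injective (Matrix.map_injective hf)

theorem mem_range_GL_map_subtype_iff (T : Subring X) (g : GL m X) :
    g ∈ (GeneralLinearGroup.map T.subtype).range ↔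
      ∀ i j, g.val i j ∈ T ∧ g⁻¹.val i j ∈ T := by
  refine ⟨?_, fun h => ?_⟩
  · rintro ⟨a, rfl⟩ i j
    exact ⟨(a.val i j).2, (a⁻¹.val i j).2⟩
  have hinj : Function.Injective (T.subtype.mapMatrix (m := m)) :=
    Matrix.map_injective T.subtype_injective
  let a : Matrix m m T := Matrix.of fun i j => ⟨g.val i j, (h i j).1⟩
  let b : Matrix m m T := Matrix.of fun i j => ⟨g⁻¹.val i j, (h i j).2⟩
  have hab : a * b = 1 := hinj (by rw [map_mul, map_one]; exact g.mul_inv)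
  have hba : b * a = 1 := hinj (by rw [map_mul, map_one]; exact g.inv_mul)
  exact ⟨⟨a, b, hab, hba⟩, Units.ext rfl⟩

theorem exists_finite_forall_lift_GL_subring [Group.FG G] (ρ : G →* GL m X) :
    ∃ E : Set X, E.Finite ∧ ∀ T : Subring X, E ⊆ T →
      ∃ ρ' : G →* GL m T, (GeneralLinearGroup.map T.subtype).comp ρ' = ρ := by
  obtain ⟨S, hS⟩ := Group.fg_def.1 (inferInstance : Group.FG G)
  let entries (g : GL m X) : Set X := Set.range fun ij : m × m => g.val ij.1 ij.2
  refine ⟨⋃ s ∈ S, entries (ρ s) ∪ entries (ρ s)⁻¹,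
    S.finite_toSet.biUnion fun s _ => (Set.finite_range _).union (Set.finite_range _),
    fun T hT => ?_⟩
  let ψ : GL m T →* GL m X := GeneralLinearGroup.map T.subtype
  have hψ : Function.Injective ψ := GL_map_injective T.subtype_injective
  have hgen : Subgroup.closure (S : Set G) ≤ ψ.range.comap ρ := by
    refine (Subgroup.closure_le _).2 fun s hs => (mem_range_GL_map_subtype_iff T _).2 fun i j =>
      ⟨hT (Set.mem_biUnion hs (.inl ⟨(i, j), rfl⟩)),
        hT (Set.mem_biUnion hs (.inr ⟨(i, j), rfl⟩))⟩
  let ρT : G →* ψ.range := ρ.codRestrict _ fun x => hgen (hS ▸ Subgroup.mem_top x)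
  refine ⟨(MonoidHom.ofInjective hψ).symm.toMonoidHom.comp ρT, MonoidHom.ext fun x => ?_⟩
  exact congrArg Subtype.val ((MonoidHom.ofInjective hψ).apply_symm_apply (ρT x))

theorem exists_finiteType_forall_isUnit_lift_GL [Group.FG G] (ρ : G →* GL m X) {R : Set X}
    (hR : R.Finite) :
    ∃ T : Subring X, Algebra.FiniteType ℤ T ∧ R ⊆ T ∧
      (∀ t : T, (t : X) ∈ R → IsUnit (t : X) → IsUnit t) ∧
      ∃ ρ' : G →* GL m T, (GeneralLinearGroup.map T.subtype).comp ρ' = ρ := by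
  obtain ⟨E, hE, hlift⟩ := exists_finite_forall_lift_GL_subring ρ
  let F : Set X := E ∪ R ∪ Ring.inverse '' R
  have hF : F.Finite := (hE.union hR).union (hR.image _)
  refine ⟨(Algebra.adjoin ℤ F).toSubring, ?_, ?_, ?_, ?_⟩
  · exact (Subalgebra.fg_iff_finiteType _).1 ⟨hF.toFinset, by rw [hF.coe_toFinset]⟩
  · exact fun x hx => Algebra.subset_adjoin (.inl (.inr hx))
  · intro t ht hunit
    exact IsUnit.of_mul_eq_one ⟨_, Algebra.subset_adjoin (.inr ⟨_, ht, rfl⟩)⟩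
      (Subtype.ext (Ring.mul_inverse_cancel _ hunit))
  · exact hlift _ fun x hx => Algebra.subset_adjoin (.inl (.inl hx))

end Specialization

section ComplexLift

variable {m : Type*} [Fintype m] [DecidableEq m] {p : ℕ} [Fact p.Prime]

-- An entry of `σ h - 1` that is nonzero modulo `p` is a unit. Adjoining the inverses of these
-- finitely many entries to `T` keeps them nonzero in `ℂ`.
theorem exists_injective_GL_complex_of_coprime {H : Type*} [Group H] [Finite H]
    (hH : (Nat.card H).Coprime p) {ρ : H →* GL m (ZMod p)} (hρ : Function.Injective ρ) :
    ∃ σ : H →* GL m ℂ, Function.Injective σ := by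
  obtain ⟨σ, hσ⟩ := exists_lift_GL_pi_zmod_prime_pow hH ρ
  let R : Set (∀ k, ZMod (p ^ (k + 1))) :=
    Set.range fun hij : H × m × m => ((σ hij.1).val - 1) hij.2.1 hij.2.2
  obtain ⟨T, _, -, hTunit, σT, hσT⟩ :=
    exists_finiteType_forall_isUnit_lift_GL σ (Set.finite_range _ : R.Finite)
  obtain ⟨L, _, _, ⟨φ⟩⟩ := exists_ringHom_numberField T
  let τ : T →+* ℂ := (IsAlgClosed.lift : L →ₐ[ℚ] ℂ).toRingHom.comp φ
  refine ⟨(GeneralLinearGroup.map τ).comp σT, (injective_iff_map_eq_one _).2 fun h hh => ?_⟩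
  by_contra hne
  obtain ⟨i, j, hij⟩ : ∃ i j, ((ρ h).val - 1) i j ≠ 0 := by
    by_contra! hzero
    exact hne (hρ ((Units.ext (sub_eq_zero.1 (Matrix.ext hzero))).trans ρ.map_one.symm))
  have hval : ((((σT h).val - 1) i j : T) : ∀ k, ZMod (p ^ (k + 1))) = ((σ h).val - 1) i j := by
    rw [← hσT]
    exact (GL_map_val_sub_one_apply T.subtype (σT h) i j).symm
  have hunit : IsUnit (((σ h).val - 1) i j) := by
    refine Pi.isUnit_iff.2 fun k => (isUnit_map_iff (zmodPowReduction p k) _).1 ?_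
    have hred := GL_map_val_sub_one_apply
      ((zmodPowReduction p k).comp (Pi.evalRingHom _ k)) (σ h) i j
    rw [← MonoidHom.comp_apply, hσ k] at hred
    exact (hred ▸ hij : _ ≠ (0 : ZMod p)).isUnit
  have hunit' : IsUnit (((σT h).val - 1) i j) :=
    hTunit _ (hval ▸ ⟨(h, i, j), rfl⟩) (hval ▸ hunit)
  refine (hunit'.map τ).ne_zero ?_
  rw [← GL_map_val_sub_one_apply, ← MonoidHom.comp_apply, hh, Units.val_one, sub_self,
    Matrix.zero_apply]

theorem exists_index_le_derivedSeries_two_eq_bot {G : Type*} [Group G] [Finite G]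
    {ι : G →* GL m (ZMod p)} (hι : Function.Injective ι) (V : Subgroup G) [V.Normal]
    [IsMulCommutative V] (hcard : Nat.card V ∣ p) (hindex : ¬ p ∣ V.index) :
    ∃ G₀ : Subgroup G, G₀.index ≤ 5 ^ (2 * Fintype.card m ^ 2) ∧ derivedSeries G₀ 2 = ⊥ := by
  have hcop : (Nat.card (G ⧸ V)).Coprime p :=
    (((Fact.out : p.Prime).coprime_iff_not_dvd).2 hindex).symm
  obtain ⟨s, hs⟩ := exists_section_of_coprime_card_ker (QuotientGroup.mk'_surjective V)
    (by rw [QuotientGroup.ker_mk']; exact hcop.symm.coprime_dvd_left hcard)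
  have hs_inj : Function.Injective s :=
    Function.LeftInverse.injective fun x => DFunLike.congr_fun hs x
  obtain ⟨σ, hσ⟩ := exists_injective_GL_complex_of_coprime (ρ := ι.comp s) hcop (hι.comp hs_inj)
  obtain ⟨A, hA, hAcomm⟩ := exists_isMulCommutative_index_le_of_injective_GL_complex hσ
  refine ⟨A.comap (QuotientGroup.mk' V), ?_, ?_⟩
  · rwa [Subgroup.index_comap_of_surjective _ (QuotientGroup.mk'_surjective V)]
  · let f := (QuotientGroup.mk' V).subgroupComap A
    have hker : ∀ x : f.ker, ((x : A.comap (QuotientGroup.mk' V)) : G) ∈ V := fun x =>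
      (QuotientGroup.eq_one_iff _).1 (congrArg Subtype.val x.2)
    have : IsMulCommutative f.ker := ⟨⟨fun x y => Subtype.ext <| Subtype.ext <|
      congrArg V.subtype (mul_comm' ⟨_, hker x⟩ ⟨_, hker y⟩)⟩⟩
    exact derivedSeries_two_eq_bot_of_isMulCommutative_ker f

end ComplexLift

section SplitPrimes

open NumberField

universe u

/-- The rational primes `p` that have a prime of residue degree one above them in `L`, encoded by a
ring homomorphism to `ZMod p`; a finitely generated ring that maps to `L` then maps to `ZMod p` for
almost all of them. -/
def splitPrimes (L : Type*) [Field L] : Set ℕ :=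
  {p | p.Prime ∧ Nonempty (𝓞 L →+* ZMod p)}

theorem exists_forall_mem_splitPrimes_ringHom_zmod (T : Type u) [CommRing T] [CharZero T]
    [Algebra.FiniteType ℤ T] :
    ∃ (L : Type u) (_ : Field L) (_ : NumberField L) (M : ℕ),
      ∀ p ∈ splitPrimes L, M < p → Nonempty (T →+* ZMod p) := by
  obtain ⟨L, _, _, ⟨φ⟩⟩ := exists_ringHom_numberField T
  obtain ⟨S, hS⟩ := (Algebra.FiniteType.out : (⊤ : Subalgebra ℤ T).FG)
  have : Algebra.IsAlgebraic ℤ L :=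
    ⟨fun y => (IsFractionRing.isAlgebraic_iff ℤ ℚ L).2 (Algebra.IsAlgebraic.isAlgebraic y)⟩
  classical
  obtain ⟨d, hd, hint⟩ := Algebra.IsAlgebraic.exists_integral_multiples ℤ (S.image φ)
  refine ⟨L, inferInstance, inferInstance, d.natAbs, fun p ⟨hp, ⟨ψ⟩⟩ hlt => ?_⟩
  have : Fact p.Prime := ⟨hp⟩
  let W : Submonoid (𝓞 L) := (nonZeroDivisors (ZMod p)).comap ψ
  have hW : W ≤ nonZeroDivisors (𝓞 L) := fun w hw => mem_nonZeroDivisors_of_ne_zero fun h0 =>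
    nonZeroDivisors.ne_zero hw (h0 ▸ map_zero ψ)
  have hψ : ∀ w : W, IsUnit (ψ w) := fun w => (nonZeroDivisors.ne_zero w.2).isUnit
  have hdW : (d : 𝓞 L) ∈ W := by
    refine mem_nonZeroDivisors_of_ne_zero fun h0 => hlt.not_ge ?_
    rw [map_intCast, ZMod.intCast_zmod_eq_zero_iff_dvd, ← Int.dvd_natAbs,
      Int.natCast_dvd_natCast] at h0
    exact Nat.le_of_dvd (Int.natAbs_pos.2 hd) h0
  let B := Localization.subalgebra.ofField L W hW
  have hrange : ∀ t, φ t ∈ B := by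
    suffices h : ⊤ ≤ (B.restrictScalars ℤ).comap φ.toIntAlgHom from fun t => h trivial
    rw [← hS, Algebra.adjoin_le_iff]
    intro t ht
    refine ⟨⟨_, hint _ (Finset.mem_image_of_mem φ ht)⟩, d, hdW, ?_⟩
    have hdL : (d : L) ≠ 0 := Int.cast_ne_zero.2 hd
    refine (eq_mul_inv_iff_mul_eq₀ (by rwa [map_intCast])).2 ?_
    rw [map_intCast, mul_comm, ← zsmul_eq_mul]
    rfl
  exact ⟨(IsLocalization.lift hψ : B →+* ZMod p).comp (φ.codRestrict B hrange)⟩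

end SplitPrimes

section OrdersModPrime

open Polynomial

variable {m : Type*} [Fintype m] [DecidableEq m]

section FinitePrimeField

variable {p : ℕ} [Fact p.Prime]

theorem prod_X_sub_C_dvd_X_pow_sub_X {ι : Type*} {S : Finset ι} {f : ι → ZMod p}
    (hf : Set.InjOn f S) : ∏ i ∈ S, (X - C (f i)) ∣ X ^ p - X := by
  refine Finset.prod_dvd_of_coprime (fun i hi j hj hij => ?_) fun i _ => ?_
  · exact isCoprime_X_sub_C_of_isUnit_sub (sub_ne_zero.2 fun h => hij (hf hi hj h)).isUnit
  · rw [dvd_iff_isRoot, IsRoot, eval_sub, eval_pow, eval_X, ZMod.pow_card, sub_self]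

theorem val_pow_sub_val_pow_eq_zero {g : GL m (ZMod p)} {f : (ZMod p)[X]}
    (hf : f ∣ X ^ p - X) {N : ℕ} (hg : aeval g.val f ^ N = 0) : (g.val ^ p - g.val) ^ N = 0 := by
  obtain ⟨q, hq⟩ := hf
  calc (g.val ^ p - g.val) ^ N = aeval g.val (((X : (ZMod p)[X]) ^ p - X) ^ N) := by
        rw [map_pow, map_sub, map_pow, aeval_X]
    _ = aeval g.val f ^ N * aeval g.val q ^ N := by
        rw [hq, mul_pow, map_mul, map_pow, map_pow]
    _ = 0 := by rw [hg, zero_mul]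

theorem pow_sub_one_eq_one_of_aeval_eq_zero {g : GL m (ZMod p)} {f : (ZMod p)[X]}
    (hf : f ∣ X ^ p - X) (hg : aeval g.val f = 0) : g ^ (p - 1) = 1 := by
  have hpow : g ^ p = g := Units.ext <| sub_eq_zero.1 <|
    (pow_one _).symm.trans (val_pow_sub_val_pow_eq_zero hf ((pow_one _).trans hg))
  rw [← mul_eq_right (b := g), pow_sub_one_mul (NeZero.ne p), hpow]

theorem pow_mul_sub_one_eq_one_of_aeval_pow_eq_zero {g : GL m (ZMod p)} {f : (ZMod p)[X]}
    (hf : f ∣ X ^ p - X) {N : ℕ} (hN : N ≤ p) (hg : aeval g.val f ^ N = 0) :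
    g ^ (p * (p - 1)) = 1 := by
  rcases isEmpty_or_nonempty m with hm | hm
  · exact Subsingleton.elim _ _
  have hfrob := pow_eq_zero_of_le hN (val_pow_sub_val_pow_eq_zero hf hg)
  rw [sub_pow_char_of_commute (p := p) ((Commute.refl g.val).pow_left p), sub_eq_zero] at hfrob
  have hpow : (g ^ p) ^ p = g ^ p := Units.ext hfrob
  rw [pow_mul, ← mul_eq_right (b := g ^ p), pow_sub_one_mul (NeZero.ne p), hpow]

end FinitePrimeField

theorem mapMatrix_aeval {R S : Type*} [CommRing R] [CommRing S] (f : R →+* S) (A : Matrix m m R)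
    (P : R[X]) : f.mapMatrix (aeval A P) = aeval (f.mapMatrix A) (P.map f) := by
  refine map_aeval_eq_aeval_map (RingHom.ext fun r => ?_) P A
  simp only [RingHom.comp_apply, Matrix.algebraMap_eq_diagonal, RingHom.mapMatrix_apply,
    Matrix.diagonal_map (map_zero f)]
  rfl

theorem aeval_prod_X_sub_C_pow_eq_zero_of_subring {B S : Type*} [CommRing B] [CommRing S]
    {T : Subring B} (ψ : T →+* S) {R : Finset B} (hR : (R : Set B) ⊆ T)
    {A : Matrix m m T} {N : ℕ}
    (hA : aeval (T.subtype.mapMatrix A) (∏ μ ∈ R, (X - C μ)) ^ N = 0) :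
    aeval (ψ.mapMatrix A) (∏ μ : R, (X - C (ψ ⟨μ, hR μ.2⟩))) ^ N = 0 := by
  let P : T[X] := ∏ μ : R, (X - C ⟨μ, hR μ.2⟩)
  have hPT : P.map T.subtype = ∏ μ ∈ R, (X - C μ) := by
    rw [← Finset.prod_coe_sort, Polynomial.map_prod]
    simp only [Polynomial.map_sub, map_X, map_C, Subring.subtype_apply]
  have hPψ : P.map ψ = ∏ μ : R, (X - C (ψ ⟨μ, hR μ.2⟩)) := by
    simp only [P, Polynomial.map_prod, Polynomial.map_sub, map_X, map_C]
  have hzero : aeval A P ^ N = 0 := by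
    refine Matrix.map_injective (f := T.subtype) T.subtype_injective ?_
    change T.subtype.mapMatrix _ = T.subtype.mapMatrix 0
    rw [map_pow, mapMatrix_aeval, hPT, hA, map_zero]
  rw [← hPψ, ← mapMatrix_aeval, ← map_pow, hzero, map_zero]

section AlgClosed

variable {K Ω : Type*} [Field K] [CharZero K] [Field Ω] [IsAlgClosed Ω] [DecidableEq Ω]

theorem aeval_prod_roots_charpoly_pow_card_eq_zero (A : Matrix m m Ω) :
    aeval A (∏ μ ∈ A.charpoly.roots.toFinset, (X - C μ)) ^ Fintype.card m = 0 := by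
  have hdvd : A.charpoly ∣ (∏ μ ∈ A.charpoly.roots.toFinset, (X - C μ)) ^ Fintype.card m := by
    nth_rw 1 [(IsAlgClosed.splits A.charpoly).eq_prod_roots_of_monic A.charpoly_monic,
      Finset.prod_multiset_map_count, ← Finset.prod_pow]
    refine Finset.prod_dvd_prod_of_dvd _ _ fun μ _ => pow_dvd_pow _ ?_
    exact (Multiset.count_le_card _ _).trans
      ((card_roots' _).trans_eq A.charpoly_natDegree_eq_dim)
  obtain ⟨q, hq⟩ := hdvd
  rw [← map_pow, hq, map_mul, Matrix.aeval_self_charpoly, zero_mul]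

theorem aeval_prod_roots_charpoly_eq_zero_of_isSemisimple [Algebra K Ω] {A : Matrix m m K}
    (hA : Module.End.IsSemisimple A.mulVecLin) :
    aeval (A.map (algebraMap K Ω))
      (∏ μ ∈ (A.map (algebraMap K Ω)).charpoly.roots.toFinset, (X - C μ)) = 0 := by
  have hsqfree : Squarefree (minpoly K A) := by
    rw [← Matrix.minpoly_toLin', Matrix.toLin'_apply']
    exact hA.minpoly_squarefree
  let q := (minpoly K A).map (algebraMap K Ω)
  have hsep : q.Separable := (PerfectField.separable_iff_squarefree.2 hsqfree).map
  have hdvd : q ∣ (A.map (algebraMap K Ω)).charpoly := by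
    rw [Matrix.charpoly_map]
    exact Polynomial.map_dvd _ A.minpoly_dvd_charpoly
  have hprod : q ∣ ∏ μ ∈ (A.map (algebraMap K Ω)).charpoly.roots.toFinset, (X - C μ) := by
    refine ((IsAlgClosed.splits q).dvd_iff_roots_le_roots hsep.ne_zero
      (Finset.prod_ne_zero_iff.2 fun μ _ => X_sub_C_ne_zero μ)).2 ?_
    rw [roots_prod_X_sub_C, Multiset.le_iff_subset (nodup_roots hsep)]
    exact fun μ hμ => Multiset.mem_toFinset.2
      (Multiset.subset_of_le (roots.le_of_dvd (Matrix.charpoly_monic _).ne_zero hdvd) hμ)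
  obtain ⟨s, hs⟩ := hprod
  have hq : aeval (A.map (algebraMap K Ω)) q = 0 := by
    rw [← RingHom.mapMatrix_apply, ← mapMatrix_aeval, minpoly.aeval, map_zero]
  rw [hs, map_mul, hq, zero_mul]

end AlgClosed

end OrdersModPrime

section Reduction

open Polynomial

universe u

variable {G m : Type*} [Group G] [Group.FG G] [Fintype m] [DecidableEq m]

theorem exists_subring_lift_GL_ringHom_zmod_injOn {F : Type u} [Field F] [CharZero F]
    (ρ : G →* GL m F) {R : Set F} (hR : R.Finite) :
    ∃ T : Subring F, R ⊆ T ∧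
      (∃ ρ' : G →* GL m T, (GeneralLinearGroup.map T.subtype).comp ρ' = ρ) ∧
      ∃ (L : Type u) (_ : Field L) (_ : NumberField L) (M : ℕ), ∀ p ∈ splitPrimes L, M < p →
        ∃ ψ : T →+* ZMod p, Set.InjOn ψ (T.subtype ⁻¹' R) := by
  let D : Set F := Set.image2 (· - ·) R R
  obtain ⟨T, _, hRT, hTunit, hlift⟩ :=
    exists_finiteType_forall_isUnit_lift_GL ρ (hR.union (hR.image2 _ hR) : (R ∪ D).Finite)
  obtain ⟨L, _, _, M, hL⟩ := exists_forall_mem_splitPrimes_ringHom_zmod T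
  refine ⟨T, Set.subset_union_left.trans hRT, hlift, L, _, ‹_›, M, fun p hp hlt => ?_⟩
  have : Fact p.Prime := ⟨hp.1⟩
  obtain ⟨ψ⟩ := hL p hp hlt
  refine ⟨ψ, fun a ha b hb hab => by_contra fun hne => ?_⟩
  have hunit : IsUnit (a - b) := hTunit _ (.inr ⟨a, ha, b, hb, rfl⟩)
    (sub_ne_zero.2 fun h => hne (Subtype.ext h)).isUnit
  exact (hunit.map ψ).ne_zero (by rw [map_sub, hab, sub_self])

theorem exists_GL_zmod_reduction_of_isAlgClosed {Ω : Type u} [Field Ω] [CharZero Ω] [IsAlgClosed Ω]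
    [DecidableEq Ω] (ρ : G →* GL m Ω) {x : G} (hx : ρ x ≠ 1) {ι : Type*} [Finite ι] (γ : ι → G) :
    ∃ (L : Type u) (_ : Field L) (_ : NumberField L) (M : ℕ), ∀ p ∈ splitPrimes L, M < p →
      ∃ Θ : G →* GL m (ZMod p), Θ x ≠ 1 ∧ ∀ i, Θ (γ i) ^ (p * (p - 1)) = 1 ∧
        (aeval (ρ (γ i)).val (∏ μ ∈ (ρ (γ i)).val.charpoly.roots.toFinset, (X - C μ)) = 0 →
          Θ (γ i) ^ (p - 1) = 1) := by
  obtain ⟨a, b, hab⟩ : ∃ a b, ((ρ x).val - 1) a b ≠ 0 := by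
    by_contra! hzero
    exact hx (Units.ext (sub_eq_zero.1 (Matrix.ext hzero)))
  let R : ι → Finset Ω := fun i => (ρ (γ i)).val.charpoly.roots.toFinset
  obtain ⟨T, hRT, ⟨ρ', rfl⟩, L, _, _, M, hL⟩ := exists_subring_lift_GL_ringHom_zmod_injOn ρ
    (R := {0, ((ρ x).val - 1) a b} ∪ ⋃ i, R i)
    ((Set.toFinite _).union (Set.finite_iUnion fun i => (R i).finite_toSet))
  have hroots : ∀ i, (R i : Set Ω) ⊆ T := fun i =>
    (Set.subset_iUnion (fun i => (R i : Set Ω)) i).trans (Set.subset_union_right.trans hRT)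
  refine ⟨L, _, ‹_›, max M (Fintype.card m), fun p hp hlt => ?_⟩
  have : Fact p.Prime := ⟨hp.1⟩
  obtain ⟨ψ, hψ⟩ := hL p hp (lt_of_le_of_lt (le_max_left _ _) hlt)
  refine ⟨(GeneralLinearGroup.map ψ).comp ρ', fun h => hab ?_, fun i => ?_⟩
  · have hentry : ψ (((ρ' x).val - 1) a b) = ψ 0 := by
      rw [← GL_map_val_sub_one_apply, ← MonoidHom.comp_apply, h, Units.val_one, sub_self,
        Matrix.zero_apply, map_zero]
    have hval := GL_map_val_sub_one_apply T.subtype (ρ' x) a b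
    rw [MonoidHom.comp_apply, hval, hψ (.inl (.inr hval.symm)) (.inl (.inl T.subtype.map_zero))
      hentry, map_zero]
  · have hinj : Set.InjOn (fun μ : R i => ψ ⟨μ, hroots i μ.2⟩)
        (Finset.univ : Finset (R i)) := fun μ _ ν _ h => Subtype.ext <| Subtype.mk.inj <|
      hψ (.inr (Set.mem_iUnion.2 ⟨i, μ.2⟩)) (.inr (Set.mem_iUnion.2 ⟨i, ν.2⟩)) h
    have hdvd := prod_X_sub_C_dvd_X_pow_sub_X hinj
    refine ⟨pow_mul_sub_one_eq_one_of_aeval_pow_eq_zero hdvd ((le_max_right _ _).trans hlt.le) <|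
      aeval_prod_X_sub_C_pow_eq_zero_of_subring ψ (hroots i)
        (aeval_prod_roots_charpoly_pow_card_eq_zero _), fun hzero => ?_⟩
    have hψzero := aeval_prod_X_sub_C_pow_eq_zero_of_subring ψ (hroots i) ((pow_one _).trans hzero)
    exact pow_sub_one_eq_one_of_aeval_eq_zero hdvd ((pow_one _).symm.trans hψzero)

theorem exists_GL_zmod_reduction {K : Type u} [Field K] [CharZero K] (ρ : G →* GL m K) {x : G}
    (hx : ρ x ≠ 1) {ι : Type*} [Finite ι] (γ : ι → G) :
    ∃ (L : Type u) (_ : Field L) (_ : NumberField L) (M : ℕ), ∀ p ∈ splitPrimes L, M < p →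
      ∃ Θ : G →* GL m (ZMod p), Θ x ≠ 1 ∧ ∀ i, Θ (γ i) ^ (p * (p - 1)) = 1 ∧
        (Module.End.IsSemisimple (ρ (γ i)).val.mulVecLin → Θ (γ i) ^ (p - 1) = 1) := by
  classical
  have : CharZero (AlgebraicClosure K) :=
    charZero_of_injective_algebraMap (algebraMap K _).injective
  obtain ⟨L, _, _, M, h⟩ := exists_GL_zmod_reduction_of_isAlgClosed
    ((GeneralLinearGroup.map (algebraMap K (AlgebraicClosure K))).comp ρ) (x := x)
    (fun h1 => hx (GL_map_injective (algebraMap K _).injective (h1.trans (map_one _).symm))) γ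
  refine ⟨L, _, ‹_›, M, fun p hp hlt => ?_⟩
  obtain ⟨Θ, hΘx, hΘ⟩ := h p hp hlt
  exact ⟨Θ, hΘx, fun i => ⟨(hΘ i).1, fun hss =>
    (hΘ i).2 (aeval_prod_roots_charpoly_eq_zero_of_isSemisimple hss)⟩⟩

end Reduction

section PrimeSums

theorem exists_totient_lt_mul {ε : ℝ} (hε : 0 < ε) : ∃ Q : ℕ, Q ≠ 0 ∧ (Q.totient : ℝ) < ε * Q := by
  have hdiverges := (not_summable_iff_tendsto_nat_atTop_of_nonneg fun n =>
    Set.indicator_nonneg (fun _ _ => by positivity) n).1 not_summable_one_div_on_primes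
  obtain ⟨N, hN⟩ := (hdiverges.eventually_gt_atTop (-Real.log ε)).exists
  refine ⟨N.factorial, N.factorial_ne_zero, ?_⟩
  have hsum : -Real.log ε < ∑ p ∈ N.factorial.primeFactors, (p : ℝ)⁻¹ := by
    refine hN.trans_le ?_
    rw [Finset.sum_indicator_eq_sum_filter]
    simp_rw [one_div]
    refine Finset.sum_le_sum_of_subset_of_nonneg (fun p hp => ?_) fun _ _ _ => by positivity
    obtain ⟨hpN, hp⟩ := Finset.mem_filter.1 hp
    exact Nat.mem_primeFactors.2
      ⟨hp, hp.dvd_factorial.2 (Finset.mem_range.1 hpN).le, N.factorial_ne_zero⟩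
  have hprod : ∏ p ∈ N.factorial.primeFactors, (1 - (p : ℝ)⁻¹) < ε := calc
    _ ≤ ∏ p ∈ N.factorial.primeFactors, Real.exp (-(p : ℝ)⁻¹) :=
      Finset.prod_le_prod (fun p _ => sub_nonneg.2 (Nat.cast_inv_le_one p))
        fun p _ => Real.one_sub_le_exp_neg _
    _ = Real.exp (-∑ p ∈ N.factorial.primeFactors, (p : ℝ)⁻¹) := by
      rw [← Real.exp_sum, Finset.sum_neg_distrib]
    _ < ε := by rw [← Real.lt_log_iff_exp_lt hε]; linarith
  have htotient := congrArg (Rat.cast : ℚ → ℝ) (Nat.totient_eq_mul_prod_factors N.factorial)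
  push_cast at htotient
  rw [htotient, mul_comm]
  exact mul_lt_mul_of_pos_right hprod (by exact_mod_cast N.factorial_pos)

theorem sum_rpow_neg_le_of_log_eq {F : Finset ℕ} {k : ℕ} (hk : k ≠ 0)
    (hF : ∀ n ∈ F, Nat.log 2 n = k) {s : ℝ} (hs : 0 ≤ s) :
    ∑ n ∈ F, (n : ℝ) ^ (-s) ≤ (2 ^ k : ℝ) ^ (-s) / (k * Real.log 2) * ∑ n ∈ F, Real.log n := by
  have : 0 < Real.log 2 := Real.log_pos one_lt_two
  have : (0 : ℝ) < k := by exact_mod_cast hk.bot_lt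
  rw [Finset.mul_sum]
  refine Finset.sum_le_sum fun n hn => ?_
  have hn0 : n ≠ 0 := fun h0 => hk (by rw [← hF n hn, h0, Nat.log_zero_right])
  have hpow : (2 ^ k : ℝ) ≤ n := by exact_mod_cast hF n hn ▸ Nat.pow_log_le_self 2 hn0
  have hlog : k * Real.log 2 ≤ Real.log n := by
    rw [← Real.log_pow]
    exact Real.log_le_log (by positivity) hpow
  rw [div_mul_eq_mul_div, le_div_iff₀ (by positivity)]
  exact mul_le_mul (Real.rpow_le_rpow_of_nonpos (by positivity) hpow (neg_nonpos.2 hs)) hlog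
    (by positivity) (by positivity)

theorem half_le_one_sub_two_rpow_neg {t : ℝ} (ht0 : 0 ≤ t) (ht1 : t ≤ 1) :
    t / 2 ≤ 1 - (2 : ℝ) ^ (-t) := by
  have h := rpow_one_add_le_one_add_mul_self (s := -(1 / 2)) (by norm_num) ht0 ht1
  rw [show (1 : ℝ) + -(1 / 2) = 2⁻¹ by norm_num, Real.inv_rpow zero_le_two,
    ← Real.rpow_neg zero_le_two] at h
  linarith

theorem sum_pow_div_le_neg_log {x : ℝ} (hx0 : 0 ≤ x) (hx1 : x < 1) (I : Finset ℕ) :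
    ∑ k ∈ I, x ^ k / k ≤ -Real.log (1 - x) := by
  have hsum := Real.hasSum_pow_div_log_of_abs_lt_one (abs_lt.2 ⟨by linarith, hx1⟩)
  have hsum' : HasSum (fun k : ℕ => x ^ k / k) (-Real.log (1 - x)) := by
    rw [← hasSum_nat_add_iff' 1]
    simpa using hsum
  exact sum_le_hasSum I (fun _ _ => by positivity) hsum'

theorem sum_rpow_neg_le_of_log_eq_of_sum_log_le {F : Finset ℕ} {k : ℕ} (hk : k ≠ 0)
    (hF : ∀ n ∈ F, Nat.log 2 n = k) {a b : ℝ} (hb : 0 ≤ b)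
    (h : ∑ n ∈ F, Real.log n ≤ a * 2 ^ k + b) {s : ℝ} (hs : 1 ≤ s) :
    ∑ n ∈ F, (n : ℝ) ^ (-s) ≤
      (a * (((2 : ℝ) ^ (-(s - 1))) ^ k / k) + b * (1 / 2) ^ k) / Real.log 2 := by
  have : 0 < Real.log 2 := Real.log_pos one_lt_two
  have hk1 : (1 : ℝ) ≤ k := by exact_mod_cast hk.bot_lt
  have hpow : ((2 : ℝ) ^ (-(s - 1))) ^ k = (2 ^ k : ℝ) ^ (-s) * 2 ^ k := by
    rw [← Real.rpow_natCast, ← Real.rpow_mul zero_le_two, ← Real.rpow_natCast,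
      ← Real.rpow_mul zero_le_two, ← Real.rpow_add zero_lt_two]
    ring_nf
  have hhalf : (2 ^ k : ℝ) ^ (-s) ≤ (1 / 2) ^ k := by
    rw [one_div, inv_pow, ← Real.rpow_neg_one]
    exact Real.rpow_le_rpow_of_exponent_le (one_le_pow₀ one_le_two) (by linarith)
  calc ∑ n ∈ F, (n : ℝ) ^ (-s)
      ≤ (2 ^ k : ℝ) ^ (-s) / (k * Real.log 2) * (a * 2 ^ k + b) :=
        (sum_rpow_neg_le_of_log_eq hk hF (by linarith)).trans
          (mul_le_mul_of_nonneg_left h (by positivity))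
    _ = (a * (((2 : ℝ) ^ (-(s - 1))) ^ k / k) + b * (2 ^ k : ℝ) ^ (-s) / k) / Real.log 2 := by
        rw [hpow]; field_simp
    _ ≤ (a * (((2 : ℝ) ^ (-(s - 1))) ^ k / k) + b * (1 / 2) ^ k) / Real.log 2 := by
        gcongr
        exact (div_le_self (by positivity) hk1).trans (by gcongr)

-- The estimate comes from summing over the dyadic blocks `2 ^ k ≤ n < 2 ^ (k + 1)`.
theorem sum_rpow_neg_le_of_sum_log_le {F : Finset ℕ} (hF : ∀ n ∈ F, 2 ≤ n) {a b : ℝ} (ha : 0 ≤ a)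
    (h : ∀ N : ℕ, ∑ n ∈ F with n < N, Real.log n ≤ a * N + b) {s : ℝ} (hs1 : 1 < s) (hs2 : s ≤ 2) :
    ∑ n ∈ F, (n : ℝ) ^ (-s) ≤ (2 * a * -Real.log ((s - 1) / 2) + 2 * b) / Real.log 2 := by
  have : 0 < Real.log 2 := Real.log_pos one_lt_two
  have hb : 0 ≤ b := by simpa using h 0
  let x : ℝ := 2 ^ (-(s - 1))
  have hx1 : (s - 1) / 2 ≤ 1 - x := half_le_one_sub_two_rpow_neg (by linarith) (by linarith)
  have hblock : ∀ k ∈ F.image (Nat.log 2), ∑ n ∈ F with Nat.log 2 n = k, (n : ℝ) ^ (-s) ≤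
      (2 * a * (x ^ k / k) + b * (1 / 2) ^ k) / Real.log 2 := by
    intro k hk
    obtain ⟨n₀, hn₀, hn₀k⟩ := Finset.mem_image.1 hk
    have hk0 : k ≠ 0 := hn₀k ▸ (Nat.log_pos one_lt_two (hF _ hn₀)).ne'
    refine sum_rpow_neg_le_of_log_eq_of_sum_log_le hk0 (fun n hn => (Finset.mem_filter.1 hn).2) hb
      ?_ hs1.le
    refine (Finset.sum_le_sum_of_subset_of_nonneg (fun n hn => ?_) fun n _ _ =>
      Real.log_natCast_nonneg n).trans ((h (2 ^ (k + 1))).trans_eq (by push_cast; ring))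
    obtain ⟨hnF, hn⟩ := Finset.mem_filter.1 hn
    exact Finset.mem_filter.2 ⟨hnF, hn ▸ Nat.lt_pow_succ_log_self one_lt_two n⟩
  calc ∑ n ∈ F, (n : ℝ) ^ (-s)
      = ∑ k ∈ F.image (Nat.log 2), ∑ n ∈ F with Nat.log 2 n = k, (n : ℝ) ^ (-s) :=
        (Finset.sum_fiberwise_of_maps_to (fun n hn => Finset.mem_image_of_mem _ hn) _).symm
    _ ≤ ∑ k ∈ F.image (Nat.log 2), (2 * a * (x ^ k / k) + b * (1 / 2) ^ k) / Real.log 2 :=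
        Finset.sum_le_sum hblock
    _ = (2 * a * ∑ k ∈ F.image (Nat.log 2), x ^ k / k +
          b * ∑ k ∈ F.image (Nat.log 2), (1 / 2) ^ k) / Real.log 2 := by
        rw [← Finset.sum_div, Finset.sum_add_distrib, Finset.mul_sum, Finset.mul_sum]
    _ ≤ (2 * a * -Real.log (1 - x) + b * 2) / Real.log 2 := by
        gcongr
        · exact sum_pow_div_le_neg_log (by positivity) (by linarith) _
        · exact sum_le_hasSum _ (fun _ _ => by positivity) hasSum_geometric_two
    _ ≤ (2 * a * -Real.log ((s - 1) / 2) + 2 * b) / Real.log 2 := by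
        rw [mul_comm b 2]
        gcongr

end PrimeSums

section EulerProduct

variable {M : Type*} [CommMonoidWithZero M]

/-- The nonzero elements all of whose prime factors lie in `T`, the analogue of
`Nat.factoredNumbers` over which the partial Euler product of `T` expands as a sum. -/
def factoredElements (T : Set M) : Set M :=
  {x | x ≠ 0 ∧ ∀ q, Prime q → q ∣ x → q ∈ T}

variable [UniqueFactorizationMonoid M]

theorem exists_eq_pow_mul_of_mem_factoredElements_insert {T : Set M} {q : M} (hq : Prime q) {x : M}
    (hx : x ∈ factoredElements (insert q T)) :
    ∃ k, ∃ y ∈ factoredElements T, q ^ k * y = x := by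
  obtain ⟨y, hy, hndvd⟩ := (FiniteMultiplicity.of_prime_left hq hx.1).exists_eq_pow_mul_and_not_dvd
  refine ⟨multiplicity q x, y, ⟨fun h0 => hndvd (h0 ▸ dvd_zero q), fun q' hq' hdvd => ?_⟩, hy.symm⟩
  refine (hx.2 q' hq' (hy ▸ hdvd.mul_left _)).resolve_left fun h => hndvd (h ▸ hdvd)

variable [Subsingleton Mˣ]

theorem eq_one_of_mem_factoredElements_empty {x : M} (hx : x ∈ factoredElements ∅) : x = 1 := by
  by_contra hne
  obtain ⟨q, hq, hdvd⟩ :=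
    WfDvdMonoid.exists_irreducible_factor (mt isUnit_iff_eq_one.1 hne) hx.1
  exact hx.2 q hq.prime hdvd

theorem tsum_factoredElements_le_prod (w : M →* ENNReal) (T : Finset M) (hT : ∀ q ∈ T, Prime q) :
    ∑' x : factoredElements (T : Set M), w x ≤ ∏ q ∈ T, (1 - w q)⁻¹ := by
  classical
  induction T using Finset.induction_on with
  | empty =>
    rw [Finset.prod_empty, ← map_one w]
    have hsub : factoredElements ((∅ : Finset M) : Set M) ⊆ {1} := fun x hx =>
      eq_one_of_mem_factoredElements_empty (Finset.coe_empty (α := M) ▸ hx)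
    exact (ENNReal.tsum_mono_subtype w hsub).trans_eq (tsum_singleton 1 w)
  | insert q T hqT ih =>
    let f : ℕ × factoredElements (T : Set M) → M := fun z => q ^ z.1 * z.2
    have hcover : factoredElements ((insert q T : Finset M) : Set M) ⊆ Set.range f := by
      intro x hx
      rw [Finset.coe_insert] at hx
      obtain ⟨k, y, hy, rfl⟩ :=
        exists_eq_pow_mul_of_mem_factoredElements_insert (hT q (Finset.mem_insert_self q T)) hx
      exact ⟨(k, ⟨y, hy⟩), rfl⟩
    calc _ ≤ ∑' x : Set.range f, w x := ENNReal.tsum_mono_subtype w hcover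
      _ ≤ ∑' z : ℕ × factoredElements (T : Set M), w (q ^ z.1 * z.2) :=
        ENNReal.tsum_le_tsum_comp_of_surjective (Set.rangeFactorization_surjective (f := f))
          fun x : Set.range f => w x
      _ = (1 - w q)⁻¹ * ∑' x : factoredElements (T : Set M), w x := by
        simp_rw [ENNReal.tsum_prod', map_mul, map_pow, ENNReal.tsum_mul_left,
          ENNReal.tsum_mul_right, ENNReal.tsum_geometric]
      _ ≤ ∏ q ∈ insert q T, (1 - w q)⁻¹ := by
        rw [Finset.prod_insert hqT]
        gcongr
        exact ih fun q hq => hT q (Finset.mem_insert_of_mem hq)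

theorem inv_one_sub_le_exp {x : ℝ} (hx : x ≤ 1 / 2) :
    (1 - x)⁻¹ ≤ Real.exp (x + 2 * x ^ 2) := by
  refine le_trans ?_ (Real.add_one_le_exp _)
  rw [inv_le_iff_one_le_mul₀ (by linarith)]
  nlinarith [mul_nonneg (sq_nonneg x) (sub_nonneg.2 hx)]

theorem exists_sum_le_exp_sum_prime (w : M →* ℝ) (hw0 : ∀ x, 0 ≤ w x)
    (hw : ∀ q, Prime q → w q ≤ 1 / 2) (F : Finset M) (hF : 0 ∉ F) :
    ∃ T : Finset M, (∀ q ∈ T, Prime q) ∧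
      ∑ x ∈ F, w x ≤ Real.exp (∑ q ∈ T, (w q + 2 * w q ^ 2)) := by
  classical
  let T := F.biUnion fun x => (UniqueFactorizationMonoid.factors x).toFinset
  have hT : ∀ q ∈ T, Prime q := fun q hq => by
    obtain ⟨x, -, hqx⟩ := Finset.mem_biUnion.1 hq
    exact UniqueFactorizationMonoid.prime_of_factor q (Multiset.mem_toFinset.1 hqx)
  have hFT : (F : Set M) ⊆ factoredElements (T : Set M) := fun x hx => by
    have hx0 : x ≠ 0 := fun h0 => hF (h0 ▸ hx)
    refine ⟨hx0, fun q hq hdvd => Finset.mem_biUnion.2 ⟨x, hx, Multiset.mem_toFinset.2 ?_⟩⟩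
    obtain ⟨q', hq', hassoc⟩ :=
      UniqueFactorizationMonoid.exists_mem_factors_of_dvd hx0 hq.irreducible hdvd
    rwa [associated_iff_eq.1 hassoc]
  let v : M →* ENNReal :=
    { toFun := fun x => ENNReal.ofReal (w x)
      map_one' := by rw [map_one, ENNReal.ofReal_one]
      map_mul' := fun x y => by rw [map_mul, ENNReal.ofReal_mul (hw0 x)] }
  refine ⟨T, hT, (ENNReal.ofReal_le_ofReal_iff (Real.exp_pos _).le).1 ?_⟩
  calc ENNReal.ofReal (∑ x ∈ F, w x) = ∑ x ∈ F, v x :=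
        ENNReal.ofReal_sum_of_nonneg fun x _ => hw0 x
    _ = ∑' x : (F : Set M), v x := (Finset.tsum_subtype' F v).symm
    _ ≤ ∑' x : factoredElements (T : Set M), v x := ENNReal.tsum_mono_subtype v hFT
    _ ≤ ∏ q ∈ T, (1 - v q)⁻¹ := tsum_factoredElements_le_prod v T hT
    _ ≤ ∏ q ∈ T, ENNReal.ofReal (Real.exp (w q + 2 * w q ^ 2)) := by
        refine Finset.prod_le_prod' fun q hq => ?_
        have hq' := hw q (hT q hq)
        change (1 - ENNReal.ofReal (w q))⁻¹ ≤ _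
        rw [← ENNReal.ofReal_one, ← ENNReal.ofReal_sub _ (hw0 q),
          ← ENNReal.ofReal_inv_of_pos (by linarith)]
        exact ENNReal.ofReal_le_ofReal (inv_one_sub_le_exp hq')
    _ = ENNReal.ofReal (Real.exp (∑ q ∈ T, (w q + 2 * w q ^ 2))) := by
        rw [Real.exp_sum, ENNReal.ofReal_prod_of_nonneg fun _ _ => (Real.exp_pos _).le]

end EulerProduct

section DegreeOnePrimes

open NumberField

variable {L : Type*} [Field L] [NumberField L]

theorem nonempty_ringEquiv_zmod_of_absNorm_eq_prime {P : Ideal (𝓞 L)} [P.IsPrime] {p : ℕ}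
    (hp : p.Prime) (hP : Ideal.absNorm P = p) : Nonempty ((𝓞 L ⧸ P) ≃+* ZMod p) := by
  have hcard : Nat.card (𝓞 L ⧸ P) = p := by
    rw [← hP, Ideal.absNorm_apply, Submodule.cardQuot_apply]
  have : Finite (𝓞 L ⧸ P) := Nat.finite_of_card_ne_zero (hcard.trans_ne hp.ne_zero)
  have := Fintype.ofFinite (𝓞 L ⧸ P)
  exact ⟨(ZMod.ringEquivOfPrime (𝓞 L ⧸ P) hp (Nat.card_eq_fintype_card.symm.trans hcard)).symm⟩

theorem mem_splitPrimes_or_sq_le_absNorm {P : Ideal (𝓞 L)} (hP : Prime P) :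
    (Ideal.absNorm P = Ideal.absNorm (Ideal.under ℤ P) ∧
        Ideal.absNorm (Ideal.under ℤ P) ∈ splitPrimes L) ∨
      Ideal.absNorm (Ideal.under ℤ P) ^ 2 ≤ Ideal.absNorm P := by
  have : P.IsPrime := Ideal.isPrime_of_prime hP
  have : NeZero P := ⟨hP.ne_zero⟩
  have hp := Nat.absNorm_under_prime P
  have hnorm := Ideal.absNorm_eq_pow_inertiaDeg' P hp
  set p := Ideal.absNorm (Ideal.under ℤ P)
  set f := (Ideal.span {(p : ℤ)}).inertiaDeg' P
  have hf0 : f ≠ 0 := fun h0 => Ideal.IsPrime.ne_top' <|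
    Ideal.absNorm_eq_one_iff.1 (by rw [hnorm, h0, pow_zero])
  rcases (Nat.one_le_iff_ne_zero.2 hf0).eq_or_lt' with hf | hf
  · rw [hf, pow_one] at hnorm
    obtain ⟨e⟩ := nonempty_ringEquiv_zmod_of_absNorm_eq_prime hp hnorm
    exact .inl ⟨hnorm, hp, ⟨(e : (𝓞 L ⧸ P) →+* ZMod p).comp (Ideal.Quotient.mk P)⟩⟩
  · exact .inr (hnorm ▸ Nat.pow_le_pow_right hp.pos hf)

theorem ncard_primesOver_le_finrank (p : Ideal ℤ) [p.IsPrime] :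
    (p.primesOver (𝓞 L)).ncard ≤ Module.finrank ℚ L := by
  classical
  have := (Algebra.QuasiFinite.finite_primesOver (S := 𝓞 L) p).fintype
  rw [← RingOfIntegers.rank, ← Ideal.sum_ramification_inertia_eq_finrank p, ← Nat.card_coe_set_eq,
    Nat.card_eq_fintype_card, Fintype.card_eq_sum_ones]
  exact Finset.sum_le_sum fun P _ =>
    Nat.mul_pos (P.1.ramificationIdx_pos ℤ) (P.1.inertiaDeg_pos ℤ)

theorem card_filter_absNorm_under_eq_le_finrank {T : Finset (Ideal (𝓞 L))} (hT : ∀ P ∈ T, Prime P)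
    {p : ℕ} (hp : p.Prime) :
    (T.filter fun P => Ideal.absNorm (Ideal.under ℤ P) = p).card ≤ Module.finrank ℚ L := by
  have : (Ideal.span {(p : ℤ)}).IsPrime :=
    (Ideal.span_singleton_prime (Nat.cast_ne_zero.2 hp.ne_zero)).2 (Nat.prime_iff_prime_int.1 hp)
  refine le_trans ?_ (ncard_primesOver_le_finrank (Ideal.span {(p : ℤ)}))
  rw [← Set.ncard_coe_finset]
  refine Set.ncard_le_ncard (fun P hP => ?_) (Algebra.QuasiFinite.finite_primesOver _)
  obtain ⟨hPT, rfl⟩ := Finset.mem_filter.1 (Finset.mem_coe.1 hP)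
  exact ⟨Ideal.isPrime_of_prime (hT P hPT), Int.liesOver_span_absNorm P⟩

end DegreeOnePrimes

section DedekindZeta

open NumberField Filter Topology

variable {L : Type*} [Field L] [NumberField L]

theorem absNorm_under_prime {P : Ideal (𝓞 L)} (hP : Prime P) :
    (Ideal.absNorm (Ideal.under ℤ P)).Prime :=
  have : P.IsPrime := Ideal.isPrime_of_prime hP
  have : NeZero P := ⟨hP.ne_zero⟩
  Nat.absNorm_under_prime P

theorem two_le_absNorm {P : Ideal (𝓞 L)} (hP : Prime P) : 2 ≤ Ideal.absNorm P := by
  have h0 : Ideal.absNorm P ≠ 0 := mt Ideal.absNorm_eq_zero_iff.1 hP.ne_zero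
  have h1 : Ideal.absNorm P ≠ 1 :=
    mt Ideal.absNorm_eq_one_iff.1 (Ideal.isPrime_of_prime hP).ne_top
  lia

theorem rpow_neg_le_inv {x s : ℝ} (hx : 1 ≤ x) (hs : 1 ≤ s) : x ^ (-s) ≤ x⁻¹ :=
  Real.rpow_neg_one x ▸ Real.rpow_le_rpow_of_exponent_le hx (neg_le_neg hs)

theorem absNorm_rpow_neg_add_le {P : Ideal (𝓞 L)} (hP : Prime P) {s : ℝ} (hs : 1 ≤ s) :
    (Ideal.absNorm P : ℝ) ^ (-s) + 2 * ((Ideal.absNorm P : ℝ) ^ (-s)) ^ 2 ≤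
      (splitPrimes L).indicator (fun p => (p : ℝ) ^ (-s)) (Ideal.absNorm (Ideal.under ℤ P)) +
        3 * (1 / (Ideal.absNorm (Ideal.under ℤ P) : ℝ) ^ 2) := by
  have hsplit := mem_splitPrimes_or_sq_le_absNorm hP
  have hp := (absNorm_under_prime hP).one_lt.le
  set p := Ideal.absNorm (Ideal.under ℤ P)
  have hp1 : (1 : ℝ) ≤ p := mod_cast hp
  have hN0 : (0 : ℝ) ≤ (Ideal.absNorm P : ℝ) ^ (-s) := by positivity
  rw [one_div]
  rcases hsplit with ⟨hN, hmem⟩ | hN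
  · rw [Set.indicator_of_mem hmem, hN]
    have hsq : ((p : ℝ) ^ (-s)) ^ 2 ≤ ((p : ℝ) ^ 2)⁻¹ := by
      rw [← inv_pow]
      exact pow_le_pow_left₀ (by positivity) (rpow_neg_le_inv hp1 hs) 2
    linarith [inv_nonneg.2 (sq_nonneg (p : ℝ))]
  · have hN' : (p : ℝ) ^ 2 ≤ Ideal.absNorm P := mod_cast hN
    have hp2 : (1 : ℝ) ≤ (p : ℝ) ^ 2 := one_le_pow₀ hp1
    have hle : (Ideal.absNorm P : ℝ) ^ (-s) ≤ ((p : ℝ) ^ 2)⁻¹ :=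
      (rpow_neg_le_inv (hp2.trans hN') hs).trans (inv_anti₀ (by positivity) hN')
    have hindicator : 0 ≤ (splitPrimes L).indicator (fun p => (p : ℝ) ^ (-s)) p :=
      Set.indicator_nonneg (fun p _ => by positivity) p
    nlinarith [inv_le_one_of_one_le₀ hp2]

theorem exists_sum_absNorm_rpow_neg_add_le {T : Finset (Ideal (𝓞 L))} (hT : ∀ P ∈ T, Prime P)
    {s : ℝ} (hs : 1 ≤ s) :
    ∃ F : Finset ℕ, (F : Set ℕ) ⊆ splitPrimes L ∧
      ∑ P ∈ T, ((Ideal.absNorm P : ℝ) ^ (-s) + 2 * ((Ideal.absNorm P : ℝ) ^ (-s)) ^ 2) ≤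
        Module.finrank ℚ L * (∑ p ∈ F, (p : ℝ) ^ (-s) + 3 * ∑' n : ℕ, 1 / (n : ℝ) ^ 2) := by
  classical
  let q : Ideal (𝓞 L) → ℕ := fun P => Ideal.absNorm (Ideal.under ℤ P)
  let g : ℕ → ℝ := fun n =>
    (splitPrimes L).indicator (fun p => (p : ℝ) ^ (-s)) n + 3 * (1 / (n : ℝ) ^ 2)
  have hg : ∀ n, 0 ≤ g n := fun n =>
    add_nonneg (Set.indicator_nonneg (fun p _ => by positivity) n) (by positivity)
  refine ⟨(T.image q).filter (· ∈ splitPrimes L), fun p hp => (Finset.mem_filter.1 hp).2, ?_⟩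
  calc _ ≤ ∑ P ∈ T, g (q P) := Finset.sum_le_sum fun P hP => absNorm_rpow_neg_add_le (hT P hP) hs
    _ = ∑ p ∈ T.image q, (T.filter fun P => q P = p).card • g p := Finset.sum_comp g q
    _ ≤ ∑ p ∈ T.image q, Module.finrank ℚ L • g p := by
      refine Finset.sum_le_sum fun p hp => nsmul_le_nsmul_left (hg p) ?_
      obtain ⟨P, hP, rfl⟩ := Finset.mem_image.1 hp
      exact card_filter_absNorm_under_eq_le_finrank hT (absNorm_under_prime (hT P hP))
    _ = Module.finrank ℚ L * (∑ p ∈ T.image q with p ∈ splitPrimes L, (p : ℝ) ^ (-s) +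
          3 * ∑ p ∈ T.image q, 1 / (p : ℝ) ^ 2) := by
      rw [← Finset.smul_sum, nsmul_eq_mul, Finset.sum_add_distrib, ← Finset.mul_sum,
        Finset.sum_indicator_eq_sum_filter]
    _ ≤ _ := by
      gcongr
      exact (Real.summable_one_div_nat_pow.2 one_lt_two).sum_le_tsum _ fun n _ => by positivity

theorem exists_sum_norm_term_eq_sum_absNorm (G : Finset ℕ) (s : ℝ) :
    ∃ F : Finset (Ideal (𝓞 L)), 0 ∉ F ∧
      ∑ n ∈ G, ‖LSeries.term
        (fun n => (Nat.card {I : Ideal (𝓞 L) // Ideal.absNorm I = n} : ℂ)) s n‖ =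
        ∑ I ∈ F, (Ideal.absNorm I : ℝ) ^ (-s) := by
  classical
  have hfin := (G.erase 0).finite_toSet.preimage' (f := Ideal.absNorm (S := 𝓞 L))
    fun n _ => Ideal.finite_setOfPred_absNorm_eq n
  have hmem : ∀ I, I ∈ hfin.toFinset ↔ Ideal.absNorm I ∈ G.erase 0 := fun I =>
    hfin.mem_toFinset.trans Finset.mem_coe
  refine ⟨hfin.toFinset, fun h0 => Finset.ne_of_mem_erase ((hmem 0).1 h0) (map_zero _), ?_⟩
  rw [← Finset.sum_fiberwise_of_maps_to fun I hI => (hmem I).1 hI,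
    ← Finset.sum_erase G (a := 0) (by simp only [LSeries.term_zero, norm_zero])]
  refine Finset.sum_congr rfl fun n hn => ?_
  have hcard : Nat.card {I : Ideal (𝓞 L) // Ideal.absNorm I = n} =
      (hfin.toFinset.filter fun I => Ideal.absNorm I = n).card :=
    Nat.subtype_card _ fun I => by
      rw [Finset.mem_filter, hmem, and_iff_right_iff_imp]
      exact fun h => h ▸ hn
  rw [LSeries.norm_term_eq, if_neg (Finset.ne_of_mem_erase hn), Complex.norm_natCast,
    Complex.ofReal_re, hcard, div_eq_mul_inv, ← Real.rpow_neg n.cast_nonneg, ← nsmul_eq_mul]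
  exact (Finset.sum_eq_card_nsmul fun I hI => by rw [(Finset.mem_filter.1 hI).2]).symm

theorem exists_eventually_le_sum_absNorm_rpow_neg :
    ∃ κ : ℝ, 0 < κ ∧ ∀ᶠ s in 𝓝[>] (1 : ℝ), ∃ F : Finset (Ideal (𝓞 L)), 0 ∉ F ∧
      κ / (s - 1) ≤ ∑ I ∈ F, (Ideal.absNorm I : ℝ) ^ (-s) := by
  have hres := dedekindZeta_residue_pos L
  refine ⟨dedekindZeta_residue L / 2, half_pos hres, ?_⟩
  have hlim := (tendsto_sub_one_mul_dedekindZeta_nhdsGT L).norm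
  rw [Complex.norm_real, Real.norm_of_nonneg hres.le] at hlim
  filter_upwards [hlim.eventually_const_lt (half_lt_self hres), self_mem_nhdsWithin]
    with s hζ (hs : 1 < s)
  have hs0 : 0 < s - 1 := sub_pos.2 hs
  rw [norm_mul, ← Complex.ofReal_one, ← Complex.ofReal_sub, Complex.norm_real,
    Real.norm_of_nonneg hs0.le, ← div_lt_iff₀' hs0] at hζ
  have hne : dedekindZeta L s ≠ 0 := norm_pos_iff.1 ((by positivity : (0 : ℝ) < _).trans hζ)
  have hsum : Summable (LSeries.term
      (fun n => (Nat.card {I : Ideal (𝓞 L) // Ideal.absNorm I = n} : ℂ)) s) := by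
    by_contra h
    exact hne (tsum_eq_zero_of_not_summable h)
  obtain ⟨G, hG⟩ := (hsum.hasSum.norm.eventually (eventually_gt_nhds hζ)).exists
  obtain ⟨F, hF0, hF⟩ := exists_sum_norm_term_eq_sum_absNorm (L := L) G s
  exact ⟨F, hF0, hG.le.trans ((norm_sum_le _ _).trans_eq hF)⟩

theorem exists_eventually_neg_log_le_sum_splitPrimes (L : Type*) [Field L] [NumberField L] :
    ∃ c : ℝ, ∀ᶠ s in 𝓝[>] (1 : ℝ), ∃ F : Finset ℕ, (F : Set ℕ) ⊆ splitPrimes L ∧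
      -Real.log (s - 1) - c ≤ Module.finrank ℚ L * ∑ p ∈ F, (p : ℝ) ^ (-s) := by
  obtain ⟨κ, hκ, hζ⟩ := exists_eventually_le_sum_absNorm_rpow_neg (L := L)
  refine ⟨Module.finrank ℚ L * (3 * ∑' n : ℕ, 1 / (n : ℝ) ^ 2) - Real.log κ, ?_⟩
  filter_upwards [hζ, self_mem_nhdsWithin] with s ⟨I, hI0, hI⟩ (hs : 1 < s)
  have hs0 : 0 < s - 1 := sub_pos.2 hs
  let w : Ideal (𝓞 L) →* ℝ :=
    { toFun := fun I => (Ideal.absNorm I : ℝ) ^ (-s)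
      map_one' := by rw [map_one, Nat.cast_one, Real.one_rpow]
      map_mul' := fun I J => by
        rw [map_mul, Nat.cast_mul, Real.mul_rpow (Nat.cast_nonneg _) (Nat.cast_nonneg _)] }
  have hw : ∀ P, Prime P → w P ≤ 1 / 2 := fun P hP => by
    have hP2 : (2 : ℝ) ≤ Ideal.absNorm P := mod_cast two_le_absNorm hP
    exact (rpow_neg_le_inv (by linarith) hs.le).trans
      (one_div (2 : ℝ) ▸ inv_anti₀ two_pos hP2)
  obtain ⟨T, hT, hIT⟩ :=
    exists_sum_le_exp_sum_prime w (fun I => Real.rpow_nonneg (Nat.cast_nonneg _) _) hw I hI0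
  obtain ⟨F, hF, hTF⟩ := exists_sum_absNorm_rpow_neg_add_le hT hs.le
  refine ⟨F, hF, ?_⟩
  have hlog := (Real.log_le_iff_le_exp (by positivity)).2 (hI.trans hIT)
  rw [Real.log_div hκ.ne' hs0.ne'] at hlog
  have hbound := hlog.trans hTF
  linarith

end DedekindZeta

section DensePrimes

open NumberField Filter Topology

universe u

-- As `s → 1⁺`, the sum of `p ^ (-s)` over the split primes is at least `-log (s - 1) / [L : ℚ]`,
-- whereas the assumption bounds it by `2 a / log 2 * -log (s - 1)`, both up to `O(1)`.
theorem log_two_le_of_sum_log_le (L : Type*) [Field L] [NumberField L] {a b : ℝ} (ha : 0 ≤ a)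
    (h : ∀ (N : ℕ) (F : Finset ℕ), (F : Set ℕ) ⊆ splitPrimes L → (∀ p ∈ F, p < N) →
      ∑ p ∈ F, Real.log p ≤ a * N + b) :
    Real.log 2 ≤ 2 * a * Module.finrank ℚ L := by
  have hlog2 : 0 < Real.log 2 := Real.log_pos one_lt_two
  set d : ℝ := ((Module.finrank ℚ L : ℕ) : ℝ)
  have hd0 : 0 ≤ d := Nat.cast_nonneg _
  obtain ⟨c, hc⟩ := exists_eventually_neg_log_le_sum_splitPrimes L
  by_contra! hlt
  have hδ : 0 < 1 - 2 * a * d / Real.log 2 := sub_pos.2 ((div_lt_one hlog2).2 hlt)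
  set C := c + d * (2 * a + 2 * b / Real.log 2)
  have hlim : Tendsto (fun s : ℝ => -Real.log (s - 1)) (𝓝[>] 1) atTop := by
    have hsub : Tendsto (fun s : ℝ => s - 1) (𝓝[>] 1) (𝓝[>] 0) := by
      refine tendsto_nhdsWithin_of_tendsto_nhds_of_eventually_within _ ?_
        (eventually_nhdsWithin_of_forall fun s hs => Set.mem_Ioi.2 (sub_pos.2 hs))
      exact (sub_self (1 : ℝ) ▸ (continuous_sub_right 1).tendsto 1).mono_left nhdsWithin_le_nhds
    exact tendsto_neg_atBot_atTop.comp (Real.tendsto_log_nhdsGT_zero.comp hsub)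
  have hle2 : ∀ᶠ s in 𝓝[>] (1 : ℝ), s ≤ 2 :=
    eventually_nhdsWithin_of_eventually_nhds (eventually_le_nhds one_lt_two)
  obtain ⟨s, ⟨⟨⟨F, hF, hlower⟩, hs2⟩, hs⟩, hs1 : 1 < s⟩ := (((hc.and hle2).and
    (hlim.eventually_gt_atTop (C / (1 - 2 * a * d / Real.log 2)))).and
      eventually_mem_nhdsWithin).exists
  have hupper := sum_rpow_neg_le_of_sum_log_le (fun p hp => (hF hp).1.two_le) ha
    (fun N => h N (F.filter (· < N)) (fun p hp => hF (Finset.filter_subset _ _ hp))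
      fun p hp => (Finset.mem_filter.1 hp).2) hs1 hs2
  rw [div_lt_iff₀ hδ] at hs
  rw [Real.log_div (sub_pos.2 hs1).ne' two_ne_zero] at hupper
  have hchain := hlower.trans (mul_le_mul_of_nonneg_left hupper hd0)
  have hexpand : d * ((2 * a * -(Real.log (s - 1) - Real.log 2) + 2 * b) / Real.log 2) =
      -Real.log (s - 1) * (2 * a * d / Real.log 2) + d * (2 * a + 2 * b / Real.log 2) := by
    field_simp
    ring
  linarith

theorem exists_numberField_splitPrimes_dvd_sub_one (L : Type u) [Field L] [NumberField L] {Q : ℕ}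
    (hQ : Q ≠ 0) :
    ∃ (E : Type u) (_ : Field E) (_ : NumberField E),
      Module.finrank ℚ E ≤ Module.finrank ℚ L * Q.totient ∧
      ∀ p ∈ splitPrimes E, Q < p → p ∈ splitPrimes L ∧ Q ∣ p - 1 := by
  have : NeZero Q := ⟨hQ⟩
  have hE : NumberField (CyclotomicField Q L) := IsCyclotomicExtension.numberField {Q} L _
  have hζ := IsCyclotomicExtension.zeta_spec Q L (CyclotomicField Q L)
  refine ⟨CyclotomicField Q L, inferInstance, hE, ?_, fun p ⟨hp, ⟨f⟩⟩ hQp => ?_⟩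
  · have : IsGalois L (CyclotomicField Q L) := IsCyclotomicExtension.isGalois {Q} L _
    rw [← Module.finrank_mul_finrank ℚ L (CyclotomicField Q L),
      ← IsGalois.card_aut_eq_finrank L (CyclotomicField Q L), ← ZMod.card_units_eq_totient,
      ← Nat.card_eq_fintype_card]
    exact Nat.mul_le_mul_left _ (Nat.card_le_card_of_injective _ (hζ.autToPow_injective L))
  · have : Fact p.Prime := ⟨hp⟩
    refine ⟨⟨hp, ⟨f.comp (algebraMap (𝓞 L) (𝓞 (CyclotomicField Q L)))⟩⟩, ?_⟩
    have : NeZero (Q : ZMod p) :=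
      ⟨mt (ZMod.natCast_eq_zero_iff Q p).1 (Nat.not_dvd_of_pos_of_lt (Nat.pos_of_ne_zero hQ) hQp)⟩
    have hroot : (Polynomial.cyclotomic Q (ZMod p)).IsRoot (f hζ.toInteger) :=
      Polynomial.map_cyclotomic Q f ▸
        (hζ.toInteger_isPrimitiveRoot.isRoot_cyclotomic (Nat.pos_of_ne_zero hQ)).map
    have hprim := Polynomial.isRoot_cyclotomic_iff.1 hroot
    exact hprim.dvd_of_pow_eq_one _ (ZMod.pow_card_sub_one_eq_one (hprim.ne_zero hQ))

theorem exists_numberField_finrank_lt_mul (L : Type u) [Field L] [NumberField L] {ε : ℝ}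
    (hε : 0 < ε) :
    ∃ Q : ℕ, Q ≠ 0 ∧ ∃ (E : Type u) (_ : Field E) (_ : NumberField E),
      (Module.finrank ℚ E : ℝ) < ε * Q ∧
      ∀ p ∈ splitPrimes E, Q < p → p ∈ splitPrimes L ∧ Q ∣ p - 1 := by
  have hd : (0 : ℝ) < Module.finrank ℚ L := mod_cast Module.finrank_pos
  obtain ⟨Q, hQ0, hQ⟩ := exists_totient_lt_mul (div_pos hε hd)
  obtain ⟨E, hE, hE', hdeg, hsplit⟩ := exists_numberField_splitPrimes_dvd_sub_one L hQ0
  refine ⟨Q, hQ0, E, hE, hE', ?_, hsplit⟩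
  calc (Module.finrank ℚ E : ℝ) ≤ Module.finrank ℚ L * Q.totient := mod_cast hdeg
    _ < Module.finrank ℚ L * (ε / Module.finrank ℚ L * Q) := by gcongr
    _ = ε * Q := by field_simp

theorem sub_one_dvd_mul_lcmUpto {Q N p : ℕ} (hp : 2 ≤ p) (hpN : p ≤ N) (hQ : Q ∣ p - 1) :
    p - 1 ∣ Q * Nat.lcmUpto (N / Q) := by
  obtain ⟨m, hm⟩ := hQ
  have hQm : 0 < Q * m := by lia
  rw [hm]
  refine Nat.mul_dvd_mul_left Q (Finset.dvd_lcm (f := id) (Finset.mem_Icc.2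
    ⟨Nat.pos_of_mul_pos_left hQm, (Nat.le_div_iff_mul_le (Nat.pos_of_mul_pos_right hQm)).2 ?_⟩))
  lia

theorem log_mul_lcmUpto_le (N : ℕ) {Q : ℕ} (hQ : Q ≠ 0) :
    Real.log ↑(Q * Nat.lcmUpto (N / Q)) ≤ Real.log Q + (Real.log 4 + 4) / Q * N := by
  rw [Nat.cast_mul, Real.log_mul (Nat.cast_ne_zero.2 hQ)
    (Nat.cast_ne_zero.2 (Nat.lcmUpto_ne_zero _)), ← Chebyshev.psi_eq_log_lcmUpto]
  gcongr
  calc Chebyshev.psi (N / Q : ℕ) ≤ (Real.log 4 + 4) * (N / Q : ℕ) :=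
        Chebyshev.psi_le_const_mul_self (Nat.cast_nonneg _)
    _ ≤ (Real.log 4 + 4) * (N / Q) := by
        have := Real.log_nonneg (show (1 : ℝ) ≤ 4 by norm_num)
        gcongr
        exact Nat.cast_div_le
    _ = (Real.log 4 + 4) / Q * N := by ring

theorem sum_log_le_of_prod_le_pow {S : Set ℕ} {Q C : ℕ} (hQ : Q ≠ 0)
    (hS : ∀ p ∈ S, p.Prime ∧ Q ∣ p - 1)
    (hprod : ∀ l, 0 < l → ∀ A : Finset ℕ, (A : Set ℕ) ⊆ S → (∀ p ∈ A, p - 1 ∣ l) →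
      ∏ p ∈ A, p ≤ l ^ C)
    {N : ℕ} {F : Finset ℕ} (hF : (F : Set ℕ) ⊆ S) (hN : ∀ p ∈ F, p < N) :
    ∑ p ∈ F, Real.log p ≤ C * (Real.log Q + (Real.log 4 + 4) / Q * N) := by
  have hprime : ∀ p ∈ F, p.Prime := fun p hp => (hS p (hF hp)).1
  rw [← Real.log_prod fun p hp => Nat.cast_ne_zero.2 (hprime p hp).ne_zero, ← Nat.cast_prod]
  calc Real.log ↑(∏ p ∈ F, p) ≤ Real.log ↑((Q * Nat.lcmUpto (N / Q)) ^ C) := by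
        refine Real.log_le_log (mod_cast Finset.prod_pos fun p hp => (hprime p hp).pos)
          (Nat.cast_le.2 (hprod _ ?_ F hF fun p hp => ?_))
        · exact Nat.mul_pos (Nat.pos_of_ne_zero hQ) (Nat.lcmUpto_pos _)
        · exact sub_one_dvd_mul_lcmUpto (hprime p hp).two_le (hN p hp).le (hS p (hF hp)).2
    _ = C * Real.log ↑(Q * Nat.lcmUpto (N / Q)) := by rw [Nat.cast_pow, Real.log_pow]
    _ ≤ _ := mul_le_mul_of_nonneg_left (log_mul_lcmUpto_le N hQ) C.cast_nonneg

-- Otherwise take `l = Q * lcmUpto (N / Q)`: by Chebyshev's bound the logarithms of the split primes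
-- below `N` of a field of degree at most `ε Q` sum to at most `C * (log 4 + 4) / Q * N + O(1)`,
-- which contradicts `log_two_le_of_sum_log_le` for small `ε`.
theorem exists_pow_lt_prod_splitPrimes (L : Type*) [Field L] [NumberField L] (M C : ℕ) :
    ∃ l : ℕ, 0 < l ∧ ∃ A : Finset ℕ, (∀ p ∈ A, p ∈ splitPrimes L ∧ M < p ∧ p - 1 ∣ l) ∧
      l ^ C < ∏ p ∈ A, p := by
  by_contra! hprod
  have hlog2 : 0 < Real.log 2 := Real.log_pos one_lt_two
  have : 0 < Real.log 4 := Real.log_pos (by norm_num)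
  set c : ℝ := Real.log 4 + 4
  have hc : 0 < c := by positivity
  obtain ⟨Q, hQ0, E, _, _, hdeg, hE⟩ := exists_numberField_finrank_lt_mul L
    (show 0 < Real.log 2 / (2 * (C + 1) * c) by positivity)
  have hdensity := log_two_le_of_sum_log_le E (a := C * c / Q)
    (b := C * Real.log Q + ∑ p ∈ Finset.range (max M Q + 1), Real.log p) (by positivity)
    fun N F hF hN => by
      have hlarge := sum_log_le_of_prod_le_pow (S := {p ∈ splitPrimes E | max M Q < p}) hQ0
        (fun p hp => ⟨hp.1.1, (hE p hp.1 ((le_max_right M Q).trans_lt hp.2)).2⟩)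
        (fun l hl A hA hdvd => hprod l hl A fun p hp =>
          ⟨(hE p (hA hp).1 ((le_max_right M Q).trans_lt (hA hp).2)).1,
            (le_max_left M Q).trans_lt (hA hp).2, hdvd p hp⟩)
        (F := F.filter (max M Q < ·)) (fun p hp => (Finset.mem_filter.1 hp).imp_left (@hF p))
        fun p hp => hN p (Finset.filter_subset _ _ hp)
      have hsmall : ∑ p ∈ F with ¬ max M Q < p, Real.log p ≤
          ∑ p ∈ Finset.range (max M Q + 1), Real.log p :=
        Finset.sum_le_sum_of_subset_of_nonneg
          (fun p hp => Finset.mem_range_succ_iff.2 (not_lt.1 (Finset.mem_filter.1 hp).2))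
          fun p _ _ => Real.log_natCast_nonneg p
      rw [← Finset.sum_filter_add_sum_filter_not F (max M Q < ·)]
      linear_combination hlarge + hsmall
  have : (0 : ℝ) < Q := mod_cast Nat.pos_of_ne_zero hQ0
  refine hdensity.not_gt ?_
  calc 2 * (C * c / Q) * (Module.finrank ℚ E : ℝ)
      ≤ 2 * (C * c / Q) * (Real.log 2 / (2 * (C + 1) * c) * Q) := by gcongr
    _ = Real.log 2 * (C / (C + 1)) := by field_simp
    _ < Real.log 2 := mul_lt_of_lt_one_right hlog2 ((div_lt_one (by positivity)).2 (by linarith))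

end DensePrimes

section Main

theorem BoundedlyGenerates.exists_range_index_le_derivedSeries_two_eq_bot {G m : Type*} [Group G]
    [Fintype m] [DecidableEq m] {r : ℕ} {g : Fin r → G} (hg : BoundedlyGenerates g) {j : Fin r}
    {l : ℕ} (hl : 0 < l) (A : Finset ℕ) (hA : ∀ p ∈ A, p.Prime)
    (hbig : l ^ (r * (r + 1)) < ∏ p ∈ A, p) (Θ : ∀ p : A, G →* GL m (ZMod p))
    (hpow : ∀ p, ∀ i, i ≠ j → Θ p (g i) ^ l = 1) (hj : ∀ p, Θ p (g j) ^ (l * p) = 1) :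
    ∃ p, ∃ H : Subgroup (Θ p).range,
      H.index ≠ 0 ∧ H.index ≤ 5 ^ (2 * Fintype.card m ^ 2) ∧ derivedSeries H 2 = ⊥ := by
  have hprime : ∀ p : A, Fact (p : ℕ).Prime := fun p => ⟨hA p p.2⟩
  let Ψ : G →* ∀ p : A, GL m (ZMod p) := MonoidHom.pi Θ
  let π : ∀ p, Ψ.range →* (Θ p).range := fun p =>
    ((Pi.evalMonoidHom _ p).comp Ψ.range.subtype).codRestrict _ fun ⟨_, x, hx⟩ =>
      ⟨x, congrFun hx p⟩
  have hπ : ∀ p, Function.Surjective (π p) := fun p ⟨_, x, hx⟩ =>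
    ⟨Ψ.rangeRestrict x, Subtype.ext hx⟩
  have hj' : ∀ p, π p (Ψ.rangeRestrict (g j)) ^ (l * p) = 1 := fun p => Subtype.ext (hj p)
  obtain ⟨p, hnormal, hindex⟩ :=
    (hg.map Ψ.rangeRestrict_surjective).exists_normal_zpowers_of_prod_primes_gt hl
      (fun i hi => Subtype.ext (funext fun p => hpow p i hi)) A hA hbig π hπ hj'
  set V := Subgroup.zpowers (π p ((Ψ.rangeRestrict ∘ g) j) ^ l)
  have hcard : Nat.card V ∣ p := by
    rw [Nat.card_zpowers]
    exact orderOf_dvd_of_pow_eq_one ((pow_mul _ l p).symm.trans (hj' p))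
  obtain ⟨H, hH, hderived⟩ := exists_index_le_derivedSeries_two_eq_bot
    (Θ p).range.subtype_injective V hcard hindex
  exact ⟨p, H, Subgroup.index_ne_zero_of_finite, hH, hderived⟩

theorem BoundedlyGenerates.isVirtuallySolvable_of_isSemisimple {K G m : Type*} [Field K]
    [CharZero K] [Group G] [Fintype m] [DecidableEq m] {ρ : G →* GL m K}
    (hρ : Function.Injective ρ) {r : ℕ} {g : Fin r → G} (hg : BoundedlyGenerates g) {j : Fin r}
    (hss : ∀ i, i ≠ j → Module.End.IsSemisimple (ρ (g i)).val.mulVecLin) :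
    IsVirtuallySolvable G := by
  have := hg.fg
  refine isVirtuallySolvable_of_residually_bounded (5 ^ (2 * Fintype.card m ^ 2)) 2 fun x hx => ?_
  obtain ⟨L, _, _, M, hM⟩ := exists_GL_zmod_reduction ρ ((map_ne_one_iff ρ hρ).2 hx) g
  obtain ⟨l, hl, A, hA, hbig⟩ := exists_pow_lt_prod_splitPrimes L M (r * (r + 1))
  choose Θ hΘx hΘ using fun p : A => hM p (hA p p.2).1 (hA p p.2).2.1
  have hpow (p : A) (i : Fin r) (hi : i ≠ j) : Θ p (g i) ^ l = 1 := by
    obtain ⟨c, rfl⟩ := (hA p p.2).2.2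
    rw [pow_mul, (hΘ p i).2 (hss i hi), _root_.one_pow]
  have hj (p : A) : Θ p (g j) ^ (l * p) = 1 := by
    obtain ⟨c, rfl⟩ := (hA p p.2).2.2
    rw [mul_right_comm, mul_comm _ (p : ℕ), pow_mul, (hΘ p j).1, _root_.one_pow]
  obtain ⟨p, H, h0, hJ, hderived⟩ := hg.exists_range_index_le_derivedSeries_two_eq_bot hl A
    (fun p hp => (hA p hp).1.1) hbig Θ hpow hj
  exact ⟨(Θ p).range, inferInstance, (Θ p).rangeRestrict, H, (Θ p).rangeRestrict_surjective,
    fun h => hΘx p (congrArg Subtype.val h), h0, hJ, hderived⟩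

end Main

/-- If a subgroup `Γ` of `GL n K` (`K` of characteristic zero) is boundedly generated by
elements `γ₁, …, γ_r` at most one of which is not semi-simple, then `Γ` is
virtually solvable. -/
theorem stmt_0 {K : Type*} [Field K] [CharZero K] {n : ℕ} (hn : 1 ≤ n)
    (Γ : Subgroup (GL (Fin n) K)) (r : ℕ) (γ : Fin r → GL (Fin n) K)
    (hmem : ∀ i, γ i ∈ Γ)
    (hgen : ∀ x ∈ Γ, ∃ k : Fin r → ℤ, x = (List.ofFn fun i => γ i ^ k i).prod)
    (hss : ∀ i j : Fin r, ¬ IsSemisimpleElt (γ i) → ¬ IsSemisimpleElt (γ j) → i = j) :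
    IsVirtuallySolvable ↥Γ := by
  let g : Fin r → Γ := fun i => ⟨γ i, hmem i⟩
  have hg : BoundedlyGenerates g := fun x => by
    obtain ⟨k, hk⟩ := hgen x x.2
    refine ⟨k, Γ.subtype_injective ?_⟩
    rw [map_list_prod, List.map_ofFn]
    exact hk
  rcases isEmpty_or_nonempty (Fin r) with _ | ⟨⟨i₀⟩⟩
  · have : Subsingleton Γ := hg.subsingleton
    exact ⟨⊤, inferInstance, (inferInstance : Group.IsSolvable _)⟩
  · obtain ⟨j, hj⟩ : ∃ j, ∀ i, i ≠ j → IsSemisimpleElt (γ i) := by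
      by_cases h : ∃ j, ¬ IsSemisimpleElt (γ j)
      · obtain ⟨j, hj⟩ := h
        exact ⟨j, fun i hi => by_contra fun hc => hi (hss i j hc hj)⟩
      · exact ⟨i₀, fun i _ => not_not.1 (not_exists.1 h i)⟩
    exact hg.isVirtuallySolvable_of_isSemisimple Γ.subtype_injective hj
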